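/- arXiv:2210.07872 — 2 statements merged into one kernel-verified Lean document; each statement's English description precedes it below -/
import Mathlib

section
/- For every integer m ≥ 1 and n ≥ 2, the m-th moment of the Kesten-McKay measure with density σ(x) = n√(δ² - x²)/(2π(1-x²)) supported on [-δ, δ] where δ = 2√(n-1)/n, equals 0 for odd m and equals (1/n^m) Σ_{j=1}^{m/2} C(m-j, m/2) (j/(m-j)) n^j (n-1)^{m/2-j} for even m. -/
open Real Finset intervalIntegral

/-!
Since `√(δ² - x²) / (1 - x²) - x² √(δ² - x²) / (1 - x²) = √(δ² - x²)`, consecutive even moments of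
the Kesten–McKay measure differ by a moment of the semicircle law of radius `δ`, which is a Catalan
number up to scaling. The total mass is `1`, by means of an explicit primitive of the density, so
this recursion determines all even moments. The claimed sums are the row polynomials of Catalan's
triangle evaluated at `(n, n - 1)`, and Pascal's rule shows that they satisfy the same recursion.
-/

section CatalanTriangle

/-- The entry `C(k, k - i)` of Catalan's triangle, meant for `i ≤ k`, as the difference of binomial
coefficients given by the reflection principle. The rows are reversed, so that the Catalan numbers
are in column `0`. -/
def catalanTriangle (k i : ℕ) : ℤ := (2 * k - i).choose k - (2 * k - i).choose (k + 1)

lemma catalanTriangle_zero_right (k : ℕ) : catalanTriangle k 0 = catalan k := by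
  have hchoose := Nat.choose_succ_right_eq (2 * k) k
  rw [show 2 * k - k = k by omega] at hchoose
  have hcatalan := succ_mul_catalan_eq_centralBinom k
  rw [Nat.centralBinom_eq_two_mul_choose] at hcatalan
  zify at hchoose hcatalan
  apply mul_left_cancel₀ (show (k + 1 : ℤ) ≠ 0 by positivity)
  rw [catalanTriangle, Nat.sub_zero]
  linear_combination -hchoose - hcatalan

lemma catalanTriangle_succ_succ {k i : ℕ} (hi : i ≤ 2 * k) :
    catalanTriangle (k + 1) (i + 1) = catalanTriangle k i + catalanTriangle (k + 1) (i + 2) := by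
  simp only [catalanTriangle]
  rw [show 2 * (k + 1) - (i + 1) = 2 * k - i + 1 by omega,
    show 2 * (k + 1) - (i + 2) = 2 * k - i by omega, Nat.choose_succ_succ, Nat.choose_succ_succ]
  push_cast
  ring

lemma catalanTriangle_succ_one (k : ℕ) :
    catalanTriangle (k + 1) 1 = catalanTriangle (k + 1) 0 := by
  simp only [catalanTriangle]
  rw [show 2 * (k + 1) - 1 = 2 * k + 1 by omega, show 2 * (k + 1) - 0 = 2 * k + 1 + 1 by omega,
    Nat.choose_succ_succ' (2 * k + 1) k, Nat.choose_succ_succ' (2 * k + 1) (k + 1),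
    Nat.choose_symm_half]
  push_cast
  ring

lemma catalanTriangle_eq_zero_of_lt {k i : ℕ} (hk : 0 < k) (hi : k < i) :
    catalanTriangle k i = 0 := by
  rw [catalanTriangle, Nat.choose_eq_zero_of_lt (by omega), Nat.choose_eq_zero_of_lt (by omega),
    sub_self]

lemma two_mul_sub_add_one_mul_catalanTriangle {k i : ℕ} (hi : i ≤ k) :
    (2 * k - i + 1 : ℤ) * catalanTriangle k i = (i + 1) * (2 * k - i + 1).choose (k + 1) := by
  have hupper := Nat.add_one_mul_choose_eq (2 * k - i) k
  have hright := Nat.choose_succ_right_eq (2 * k - i) k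
  rw [show 2 * k - i - k = k - i by omega] at hright
  zify [hi, show i ≤ 2 * k by omega] at hupper hright
  apply mul_left_cancel₀ (show (k + 1 : ℤ) ≠ 0 by positivity)
  rw [catalanTriangle]
  linear_combination (i + 1 : ℤ) * hupper - (2 * k - i + 1 : ℤ) * hright

/-- The homogeneous generating polynomial of row `k` of Catalan's triangle, evaluated at
`(x, y)`. -/
def catalanTriangleSum {R : Type*} [CommRing R] (x y : R) (k : ℕ) : R :=
  ∑ i ∈ range (k + 1), (catalanTriangle k i : R) * x ^ i * y ^ (k - i)

lemma catalanTriangleSum_zero {R : Type*} [CommRing R] (x y : R) :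
    catalanTriangleSum x y 0 = 1 := by
  simp [catalanTriangleSum, catalanTriangle]

lemma sub_mul_catalanTriangleSum_succ {R : Type*} [CommRing R] (x y : R) (k : ℕ) :
    (x - y) * catalanTriangleSum x y (k + 1) =
      x ^ 2 * catalanTriangleSum x y k - catalan (k + 1) * y ^ (k + 2) := by
  set A := ∑ i ∈ range (k + 1), (catalanTriangle (k + 1) (i + 1) : R) * x ^ i * y ^ (k - i)
    with hA
  set B := ∑ i ∈ range (k + 1), (catalanTriangle (k + 1) (i + 2) : R) * x ^ i * y ^ (k - i)
    with hB
  have split_first : catalanTriangleSum x y (k + 1) = x * A + catalan (k + 1) * y ^ (k + 1) := by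
    rw [catalanTriangleSum, sum_range_succ', catalanTriangle_zero_right, hA, mul_sum]
    simp only [Nat.add_sub_add_right, pow_zero, mul_one, Nat.sub_zero, Int.cast_natCast]
    congr 1
    exact sum_congr rfl fun i _ ↦ by ring
  have pascal : A = catalanTriangleSum x y k + B := by
    rw [catalanTriangleSum, ← sum_add_distrib]
    refine sum_congr rfl fun i hi ↦ ?_
    have hik : i ≤ k := mem_range_succ_iff.1 hi
    rw [catalanTriangle_succ_succ (by omega)]
    push_cast
    ring
  have shift : x * B = y * A - catalan (k + 1) * y ^ (k + 1) := by
    rw [hB, hA, sum_range_succ, sum_range_succ' _ k,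
      catalanTriangle_eq_zero_of_lt k.succ_pos (Nat.lt_succ_self (k + 1)),
      catalanTriangle_succ_one, catalanTriangle_zero_right, mul_add, mul_add, mul_sum, mul_sum]
    have shift_term : ∀ i ∈ range k,
        x * ((catalanTriangle (k + 1) (i + 2) : R) * x ^ i * y ^ (k - i)) =
          y * ((catalanTriangle (k + 1) (i + 1 + 1) : R) * x ^ (i + 1) * y ^ (k - (i + 1))) := by
      intro i hi
      rw [show k - i = k - (i + 1) + 1 by have := mem_range.1 hi; omega]
      ring
    rw [sum_congr rfl shift_term, Nat.sub_zero]
    push_cast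
    ring
  linear_combination (x - y) * split_first + x ^ 2 * pascal + x * shift

lemma sum_choose_mul_div_eq_catalanTriangleSum {K : Type*} [Field K] [CharZero K] (x y : K)
    (k : ℕ) :
    ∑ j ∈ Icc 1 (k + 1), ((2 * (k + 1) - j).choose (k + 1) : K) *
        ((j : K) / (((2 * (k + 1) : ℕ) : K) - j)) * x ^ j * y ^ (k + 1 - j) =
      x * catalanTriangleSum x y k := by
  rw [← Ico_add_one_right_eq_Icc, sum_Ico_eq_sum_range, catalanTriangleSum, mul_sum]
  refine sum_congr (by simp) fun i hi ↦ ?_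
  have hik : i ≤ k := mem_range_succ_iff.1 (by simpa using hi)
  have hclosed := congrArg (Int.cast (R := K)) (two_mul_sub_add_one_mul_catalanTriangle hik)
  push_cast at hclosed
  have hdenom : (2 * k - i + 1 : K) ≠ 0 := by
    rw [show (2 * k - i + 1 : K) = ((2 * k - i + 1 : ℕ) : K) by
      push_cast [show i ≤ 2 * k by omega]; ring]
    exact Nat.cast_ne_zero.2 (by omega)
  rw [show 2 * (k + 1) - (1 + i) = 2 * k - i + 1 by omega, show k + 1 - (1 + i) = k - i by omega]
  have hcoeff : ((2 * k - i + 1).choose (k + 1) : K) *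
      (((1 + i : ℕ) : K) / (((2 * (k + 1) : ℕ) : K) - ((1 + i : ℕ) : K))) =
        catalanTriangle k i := by
    push_cast
    rw [show (2 * (k + 1) - (1 + i) : K) = 2 * k - i + 1 by ring, ← mul_div_assoc,
      div_eq_iff hdenom]
    linear_combination -hclosed
  rw [hcoeff]
  ring

end CatalanTriangle

section Semicircle

variable {d : ℝ}

lemma integral_sqrt_sq_sub_sq (hd : 0 ≤ d) : ∫ x in (-d)..d, √(d ^ 2 - x ^ 2) = π / 2 * d ^ 2 := by
  have scale (x : ℝ) : √(d ^ 2 - (d * x) ^ 2) = d * √(1 - x ^ 2) := by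
    rw [show d ^ 2 - (d * x) ^ 2 = d ^ 2 * (1 - x ^ 2) by ring, sqrt_mul (sq_nonneg d), sqrt_sq hd]
  have subst := smul_integral_comp_mul_left (a := -1) (b := 1) (fun x ↦ √(d ^ 2 - x ^ 2)) d
  simp only [scale, integral_const_mul, integral_sqrt_one_sub_sq, smul_eq_mul, mul_neg,
    mul_one] at subst
  rw [← subst]
  ring

lemma hasDerivAt_sq_sub_sq (a x : ℝ) : HasDerivAt (fun t ↦ a ^ 2 - t ^ 2) (-(2 * x)) x := by
  simpa using (hasDerivAt_pow 2 x).const_sub (a ^ 2)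

lemma hasDerivAt_pow_mul_sq_sub_sq_mul_sqrt (m : ℕ) {x : ℝ} (hx : 0 < d ^ 2 - x ^ 2) :
    HasDerivAt (fun t ↦ t ^ (m + 1) * ((d ^ 2 - t ^ 2) * √(d ^ 2 - t ^ 2)))
      ((m + 1) * d ^ 2 * (x ^ m * √(d ^ 2 - x ^ 2)) -
        (m + 4) * (x ^ (m + 2) * √(d ^ 2 - x ^ 2))) x := by
  have hbase := hasDerivAt_sq_sub_sq d x
  refine ((hasDerivAt_pow (m + 1) x).mul (hbase.mul (hbase.sqrt hx.ne'))).congr_deriv ?_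
  have hsqrt : √(d ^ 2 - x ^ 2) ≠ 0 := (sqrt_pos.2 hx).ne'
  have hsq : √(d ^ 2 - x ^ 2) ^ 2 = d ^ 2 - x ^ 2 := sq_sqrt hx.le
  simp only [Pi.mul_apply, Nat.add_sub_cancel]
  push_cast
  field_simp
  rw [hsq]
  ring

lemma integral_pow_add_two_mul_sqrt_sq_sub_sq (hd : 0 ≤ d) (m : ℕ) :
    (m + 4) * ∫ x in (-d)..d, x ^ (m + 2) * √(d ^ 2 - x ^ 2) =
      (m + 1) * d ^ 2 * ∫ x in (-d)..d, x ^ m * √(d ^ 2 - x ^ 2) := by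
  have integrable (c : ℝ) (k : ℕ) : IntervalIntegrable
      (fun x ↦ c * (x ^ k * √(d ^ 2 - x ^ 2))) MeasureTheory.volume (-d) d :=
    (by fun_prop : Continuous _).intervalIntegrable _ _
  have boundary := integral_eq_sub_of_hasDerivAt_of_le (neg_le_self hd)
    (by fun_prop : Continuous _).continuousOn
    (fun x hx ↦ hasDerivAt_pow_mul_sq_sub_sq_mul_sqrt m (sub_pos.2 (sq_lt_sq' hx.1 hx.2)))
    ((integrable _ m).sub (integrable _ (m + 2)))
  rw [integral_sub (integrable _ m) (integrable _ (m + 2)), integral_const_mul,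
    integral_const_mul] at boundary
  simp only [even_two.neg_pow, sub_self, zero_mul, mul_zero] at boundary
  linarith

lemma integral_pow_even_mul_sqrt_sq_sub_sq (hd : 0 ≤ d) (k : ℕ) :
    ∫ x in (-d)..d, x ^ (2 * k) * √(d ^ 2 - x ^ 2) =
      π / 2 * d ^ 2 * (d ^ 2 / 4) ^ k * catalan k := by
  induction k with
  | zero => simpa using integral_sqrt_sq_sub_sq hd
  | succ k ih =>
    have hrec := integral_pow_add_two_mul_sqrt_sq_sub_sq hd (2 * k)
    have hcatalan : ((k : ℝ) + 2) * catalan (k + 1) = 2 * (2 * k + 1) * catalan k := by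
      have hk := succ_mul_catalan_eq_centralBinom k
      have hk' := succ_mul_catalan_eq_centralBinom (k + 1)
      have hbinom := Nat.succ_mul_centralBinom_succ k
      rw [← hk, ← hk'] at hbinom
      apply mul_left_cancel₀ (show (k + 1 : ℝ) ≠ 0 by positivity)
      rify at hbinom
      linear_combination hbinom
    rw [ih] at hrec
    push_cast at hrec
    apply mul_left_cancel₀ (show (2 * k + 4 : ℝ) ≠ 0 by positivity)
    rw [mul_add_one, hrec]
    linear_combination (-(π / 4 * d ^ 4 * (d ^ 2 / 4) ^ k)) * hcatalan

end Semicircle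

section SemicircleDivOneSubSq

variable {d x : ℝ}

lemma hasDerivAt_arcsin_div (hx : x ∈ Set.Ioo (-d) d) :
    HasDerivAt (fun t ↦ arcsin (t / d)) (1 / √(d ^ 2 - x ^ 2)) x := by
  have hd : 0 < d := by linarith [hx.1, hx.2]
  have hlower : -1 < x / d := by rw [lt_div_iff₀ hd]; linarith [hx.1]
  have hupper : x / d < 1 := by rw [div_lt_one hd]; exact hx.2
  have hsqrt : √(d ^ 2 - x ^ 2) = √(1 - (x / d) ^ 2) * d := by
    rw [← sqrt_sq hd.le, ← sqrt_mul' _ (sq_nonneg d), sqrt_sq hd.le]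
    congr 1
    field_simp
  refine ((hasDerivAt_arcsin hlower.ne' hupper.ne).comp x
    ((hasDerivAt_id x).div_const d)).congr_deriv ?_
  rw [hsqrt, ← one_div_mul_one_div]

lemma hasDerivAt_arcsin_mul_div_mul_sqrt (hd : d ≤ 1) (hx : x ∈ Set.Ioo (-d) d) :
    HasDerivAt (fun t ↦ arcsin (√(1 - d ^ 2) * t / (d * √(1 - t ^ 2))))
      (√(1 - d ^ 2) / ((1 - x ^ 2) * √(d ^ 2 - x ^ 2))) x := by
  have hd0 : 0 < d := by linarith [hx.1, hx.2]
  have hs_pos : 0 < d ^ 2 - x ^ 2 := sub_pos.2 (sq_lt_sq' hx.1 hx.2)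
  have hr_pos : 0 < 1 - x ^ 2 := by nlinarith
  have hc_sq : √(1 - d ^ 2) ^ 2 = 1 - d ^ 2 := sq_sqrt (by nlinarith)
  have hs_sq : √(d ^ 2 - x ^ 2) ^ 2 = d ^ 2 - x ^ 2 := sq_sqrt hs_pos.le
  have hr_sq : √(1 - x ^ 2) ^ 2 = 1 - x ^ 2 := sq_sqrt hr_pos.le
  have hr_deriv : HasDerivAt (fun t ↦ √(1 - t ^ 2)) (-(2 * x) / (2 * √(1 - x ^ 2))) x := by
    simpa only [one_pow] using (hasDerivAt_sq_sub_sq 1 x).sqrt (by simpa using hr_pos.ne')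
  set c := √(1 - d ^ 2)
  set s := √(d ^ 2 - x ^ 2)
  set r := √(1 - x ^ 2)
  have hs : 0 < s := sqrt_pos.2 hs_pos
  have hr : 0 < r := sqrt_pos.2 hr_pos
  have hcos_sq : 1 - (c * x / (d * r)) ^ 2 = (s / (d * r)) ^ 2 := by
    field_simp
    rw [hr_sq, hs_sq, hc_sq]
    ring
  have hsin_lt : |c * x / (d * r)| < 1 := by
    rw [← sq_lt_one_iff_abs_lt_one, ← sub_pos, hcos_sq]
    positivity
  have hquot : HasDerivAt (fun t ↦ c * t / (d * √(1 - t ^ 2)))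
      ((c * (d * r) - c * x * (d * (-(2 * x) / (2 * r)))) / (d * r) ^ 2) x :=
    (((hasDerivAt_id' x).const_mul c).div (hr_deriv.const_mul d) (by positivity)).congr_deriv
      (by rw [mul_one])
  refine ((hasDerivAt_arcsin (abs_lt.1 hsin_lt).1.ne' (abs_lt.1 hsin_lt).2.ne).comp x
    hquot).congr_deriv ?_
  rw [hcos_sq, sqrt_sq (by positivity), ← hr_sq]
  field_simp
  linear_combination c * hr_sq

/-- A primitive of `√(d² - x²) / (1 - x²)` on `(-d, d)`, where `d ≤ 1`. -/
noncomputable def semicircleDivPrimitive (d x : ℝ) : ℝ :=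
  arcsin (x / d) - √(1 - d ^ 2) * arcsin (√(1 - d ^ 2) * x / (d * √(1 - x ^ 2)))

lemma hasDerivAt_semicircleDivPrimitive (hd : d ≤ 1) (hx : x ∈ Set.Ioo (-d) d) :
    HasDerivAt (semicircleDivPrimitive d) (√(d ^ 2 - x ^ 2) / (1 - x ^ 2)) x := by
  have hs_pos : 0 < d ^ 2 - x ^ 2 := sub_pos.2 (sq_lt_sq' hx.1 hx.2)
  have hr_pos : 0 < 1 - x ^ 2 := by nlinarith [hx.1, hx.2]
  refine ((hasDerivAt_arcsin_div hx).sub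
    ((hasDerivAt_arcsin_mul_div_mul_sqrt hd hx).const_mul _)).congr_deriv ?_
  have := sqrt_pos.2 hs_pos
  have hs_sq : √(d ^ 2 - x ^ 2) ^ 2 = d ^ 2 - x ^ 2 := sq_sqrt hs_pos.le
  have hc_sq : √(1 - d ^ 2) ^ 2 = 1 - d ^ 2 := sq_sqrt (by nlinarith [hx.1, hx.2])
  field_simp
  rw [hs_sq, hc_sq]
  ring

lemma continuousOn_semicircleDivPrimitive (hd0 : 0 < d) (hd : d ≤ 1) :
    ContinuousOn (semicircleDivPrimitive d) (Set.Icc (-d) d) := by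
  unfold semicircleDivPrimitive
  refine (continuous_arcsin.comp (by fun_prop)).continuousOn.sub ?_
  rcases hd.eq_or_lt with rfl | hd
  · simpa using continuousOn_const
  · refine continuousOn_const.mul (continuous_arcsin.comp_continuousOn
      (ContinuousOn.div (by fun_prop) (by fun_prop) fun x hx ↦ ?_))
    have hr_pos : 0 < 1 - x ^ 2 := by nlinarith [sq_le_sq' hx.1 hx.2]
    have := sqrt_pos.2 hr_pos
    positivity

lemma intervalIntegrable_sqrt_sq_sub_sq_div (hd0 : 0 < d) (hd : d ≤ 1) :
    IntervalIntegrable (fun x ↦ √(d ^ 2 - x ^ 2) / (1 - x ^ 2)) MeasureTheory.volume (-d) d := by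
  have hle : -d ≤ d := neg_le_self hd0.le
  rw [intervalIntegrable_iff_integrableOn_Ioc_of_le hle]
  refine integrableOn_deriv_of_nonneg (continuousOn_semicircleDivPrimitive hd0 hd)
    (fun x hx ↦ hasDerivAt_semicircleDivPrimitive hd hx) fun x hx ↦ ?_
  have hr_pos : 0 < 1 - x ^ 2 := by nlinarith [sq_lt_sq' hx.1 hx.2]
  positivity

lemma integral_sqrt_sq_sub_sq_div (hd0 : 0 < d) (hd : d ≤ 1) :
    ∫ x in (-d)..d, √(d ^ 2 - x ^ 2) / (1 - x ^ 2) = π * (1 - √(1 - d ^ 2)) := by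
  rw [integral_eq_sub_of_hasDerivAt_of_le (neg_le_self hd0.le)
    (continuousOn_semicircleDivPrimitive hd0 hd)
    (fun x hx ↦ hasDerivAt_semicircleDivPrimitive hd hx)
    (intervalIntegrable_sqrt_sq_sub_sq_div hd0 hd)]
  simp only [semicircleDivPrimitive, even_two.neg_pow, mul_neg, neg_div, div_self hd0.ne',
    arcsin_neg, arcsin_one]
  rcases hd.eq_or_lt with rfl | hd
  · simp
  · have hc : √(1 - d ^ 2) ≠ 0 := (sqrt_pos.2 (by nlinarith)).ne'
    rw [mul_comm d, div_self (mul_ne_zero hc hd0.ne'), arcsin_one]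
    ring

-- Both sides vanish at `x = ±1`, because `d ≤ 1` makes the radicand nonpositive there.
lemma one_sub_sq_mul_sqrt_sq_sub_sq_div (hd0 : 0 ≤ d) (hd : d ≤ 1) (x : ℝ) :
    (1 - x ^ 2) * (√(d ^ 2 - x ^ 2) / (1 - x ^ 2)) = √(d ^ 2 - x ^ 2) :=
  mul_div_cancel_of_imp' fun hx ↦ sqrt_eq_zero_of_nonpos (by nlinarith)

lemma integral_pow_add_two_mul_sqrt_sq_sub_sq_div (hd0 : 0 < d) (hd : d ≤ 1) (m : ℕ) :
    ∫ x in (-d)..d, x ^ (m + 2) * (√(d ^ 2 - x ^ 2) / (1 - x ^ 2)) =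
      (∫ x in (-d)..d, x ^ m * (√(d ^ 2 - x ^ 2) / (1 - x ^ 2))) -
        ∫ x in (-d)..d, x ^ m * √(d ^ 2 - x ^ 2) := by
  rw [← integral_sub
    ((intervalIntegrable_sqrt_sq_sub_sq_div hd0 hd).continuousOn_mul (by fun_prop))
    ((by fun_prop : Continuous _).intervalIntegrable _ _)]
  refine integral_congr fun x _ ↦ ?_
  linear_combination (-x ^ m) * one_sub_sq_mul_sqrt_sq_sub_sq_div hd0.le hd x

end SemicircleDivOneSubSq

section KestenMcKay

/-- The right endpoint `δ = 2√(n - 1) / n` of the support of the Kesten–McKay measure, for a real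
parameter `n`. -/
noncomputable def kestenMcKayRadius (n : ℝ) : ℝ := 2 * √(n - 1) / n

/-- The density of the Kesten–McKay measure on its support `[-δ, δ]`, for a real parameter `n`; the
formula is not cut off outside the support. -/
noncomputable def kestenMcKayDensity (n x : ℝ) : ℝ :=
  n * √(kestenMcKayRadius n ^ 2 - x ^ 2) / (2 * π * (1 - x ^ 2))

variable {n : ℝ}

lemma kestenMcKayRadius_pos (hn : 1 < n) : 0 < kestenMcKayRadius n := by
  have := sqrt_pos.2 (sub_pos.2 hn)
  unfold kestenMcKayRadius
  positivity

lemma kestenMcKayRadius_sq (hn : 1 ≤ n) : kestenMcKayRadius n ^ 2 = 4 * ((n - 1) / n ^ 2) := by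
  rw [kestenMcKayRadius, div_pow, mul_pow, sq_sqrt (sub_nonneg.2 hn)]
  ring

lemma one_sub_kestenMcKayRadius_sq (hn : 1 ≤ n) :
    1 - kestenMcKayRadius n ^ 2 = ((n - 2) / n) ^ 2 := by
  rw [kestenMcKayRadius_sq hn]
  field_simp
  ring

lemma kestenMcKayRadius_le_one (hn : 1 ≤ n) : kestenMcKayRadius n ≤ 1 := by
  have : 0 ≤ 1 - kestenMcKayRadius n ^ 2 := by
    rw [one_sub_kestenMcKayRadius_sq hn]
    positivity
  exact (abs_le.1 ((sq_le_one_iff_abs_le_one _).1 (sub_nonneg.1 this))).2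

lemma integral_pow_mul_kestenMcKayDensity (n a b : ℝ) (m : ℕ) :
    ∫ x in a..b, x ^ m * kestenMcKayDensity n x =
      n / (2 * π) *
        ∫ x in a..b, x ^ m * (√(kestenMcKayRadius n ^ 2 - x ^ 2) / (1 - x ^ 2)) := by
  rw [← integral_const_mul]
  refine integral_congr fun x _ ↦ ?_
  simp only [kestenMcKayDensity, mul_div_mul_comm]
  ring

lemma integral_kestenMcKayDensity (hn : 2 ≤ n) :
    ∫ x in (-kestenMcKayRadius n)..kestenMcKayRadius n, kestenMcKayDensity n x = 1 := by
  have hn1 : 1 < n := by linarith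
  have hc : √(1 - kestenMcKayRadius n ^ 2) = (n - 2) / n := by
    rw [one_sub_kestenMcKayRadius_sq hn1.le,
      sqrt_sq (div_nonneg (by linarith) (by linarith))]
  have hmass := integral_pow_mul_kestenMcKayDensity n (-kestenMcKayRadius n) (kestenMcKayRadius n) 0
  simp only [pow_zero, one_mul] at hmass
  rw [hmass, integral_sqrt_sq_sub_sq_div (kestenMcKayRadius_pos hn1)
    (kestenMcKayRadius_le_one hn1.le), hc]
  field_simp
  ring

lemma integral_pow_even_succ_mul_kestenMcKayDensity (hn : 1 < n) (k : ℕ) :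
    ∫ x in (-kestenMcKayRadius n)..kestenMcKayRadius n,
        x ^ (2 * (k + 1)) * kestenMcKayDensity n x =
      (∫ x in (-kestenMcKayRadius n)..kestenMcKayRadius n,
        x ^ (2 * k) * kestenMcKayDensity n x) - n * catalan k * ((n - 1) / n ^ 2) ^ (k + 1) := by
  have hδ := kestenMcKayRadius_pos hn
  have hsemicircle : n / (2 * π) * ∫ x in (-kestenMcKayRadius n)..kestenMcKayRadius n,
      x ^ (2 * k) * √(kestenMcKayRadius n ^ 2 - x ^ 2) =
        n * catalan k * ((n - 1) / n ^ 2) ^ (k + 1) := by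
    rw [integral_pow_even_mul_sqrt_sq_sub_sq hδ.le, kestenMcKayRadius_sq hn.le,
      mul_div_cancel_left₀ _ (four_ne_zero' ℝ)]
    generalize (n - 1) / n ^ 2 = u
    field_simp
    ring
  rw [integral_pow_mul_kestenMcKayDensity, integral_pow_mul_kestenMcKayDensity, mul_add_one,
    integral_pow_add_two_mul_sqrt_sq_sub_sq_div hδ (kestenMcKayRadius_le_one hn.le), mul_sub,
    hsemicircle]

lemma integral_pow_even_mul_kestenMcKayDensity (hn : 2 ≤ n) (k : ℕ) :
    ∫ x in (-kestenMcKayRadius n)..kestenMcKayRadius n,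
        x ^ (2 * (k + 1)) * kestenMcKayDensity n x =
      1 / n ^ (2 * (k + 1)) * (n * catalanTriangleSum n (n - 1) k) := by
  have hn1 : 1 < n := by linarith
  induction k with
  | zero =>
    rw [integral_pow_even_succ_mul_kestenMcKayDensity hn1]
    simp only [mul_zero, pow_zero, one_mul, integral_kestenMcKayDensity hn,
      catalanTriangleSum_zero, catalan_zero, Nat.cast_one, zero_add, pow_one, mul_one]
    field_simp
    ring
  | succ k ih =>
    have hrow := sub_mul_catalanTriangleSum_succ n (n - 1) k
    rw [sub_sub_cancel, one_mul] at hrow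
    rw [integral_pow_even_succ_mul_kestenMcKayDensity hn1, ih, hrow, div_pow]
    field_simp
    ring

lemma integral_pow_odd_mul_kestenMcKayDensity (n a : ℝ) {m : ℕ} (hm : Odd m) :
    ∫ x in (-a)..a, x ^ m * kestenMcKayDensity n x = 0 := by
  have reflect :=
    integral_comp_neg (a := -a) (b := a) fun x ↦ x ^ m * kestenMcKayDensity n x
  simp only [hm.neg_pow, kestenMcKayDensity, even_two.neg_pow, neg_neg, neg_mul,
    integral_neg] at reflect
  exact self_eq_neg.1 reflect.symm

end KestenMcKay

theorem stmt8_general (m : ℕ) (n : ℝ) (hm : 1 ≤ m) (hn : 2 ≤ n) :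
    ∫ x in (-kestenMcKayRadius n)..kestenMcKayRadius n, x ^ m * kestenMcKayDensity n x =
      if Odd m then 0 else
        (1 / n ^ m) * ∑ j ∈ Icc 1 (m / 2),
          ((m - j).choose (m / 2) : ℝ) * ((j : ℝ) / ((m : ℝ) - j)) * n ^ j
            * (n - 1) ^ (m / 2 - j) := by
  split_ifs with hodd
  · exact integral_pow_odd_mul_kestenMcKayDensity n _ hodd
  · obtain ⟨k, rfl⟩ : ∃ k, m = 2 * (k + 1) := by
      obtain ⟨l, rfl⟩ := (Nat.not_odd_iff_even.1 hodd).two_dvd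
      exact ⟨l - 1, by omega⟩
    rw [Nat.mul_div_cancel_left _ two_pos, sum_choose_mul_div_eq_catalanTriangleSum,
      integral_pow_even_mul_kestenMcKayDensity hn]

/-- Moments of the Kesten–McKay measure. -/
theorem stmt8 (m n : ℕ) (hm : 1 ≤ m) (hn : 2 ≤ n) :
    (∫ x in (-(2 * Real.sqrt ((n : ℝ) - 1) / n))..(2 * Real.sqrt ((n : ℝ) - 1) / n),
        x ^ m * ((n : ℝ) * Real.sqrt ((2 * Real.sqrt ((n : ℝ) - 1) / n) ^ 2 - x ^ 2)
          / (2 * π * (1 - x ^ 2))))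
      = if Odd m then 0 else
          (1 / (n : ℝ) ^ m) * ∑ j ∈ Finset.Icc 1 (m / 2),
            (Nat.choose (m - j) (m / 2) : ℝ) * ((j : ℝ) / ((m : ℝ) - j))
              * (n : ℝ) ^ j * ((n : ℝ) - 1) ^ (m / 2 - j) :=
  stmt8_general m n hm (mod_cast hn)
end

section
/- Let f: ℝ^N → ℝ be convex and L-Lipschitz (with respect to the Euclidean norm), and let X be a standard Gaussian vector in ℝ^N. Then for every ε > 0, P(f(X) > E[f(X)] + ε) ≤ (1/2) e^{-ε²/(2L²)}. -/
open MeasureTheory ProbabilityTheory Real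

/-!
The law of `f(X)` is the law of `q(Z)` for a one-dimensional standard Gaussian `Z` and a
nondecreasing, convex, `L`-Lipschitz `q : ℝ → ℝ`. Granting this, Jensen gives
`q 0 ≤ E[q(Z)] = E[f(X)]`, so `f(X) > E[f(X)] + ε` corresponds to `Z > ε / L`, whose probability is
at most `exp(-ε² / (2L²)) / 2`.

To find `q`, consider the convex `L`-Lipschitz functions `g` with the same law as `f`. They form a
compact set, so some `g` maximizes `‖E[g(X) X]‖`. Rearranging `g` monotonically along the lines
parallel to a unit vector `e` (Ehrhard symmetrization) preserves the law; by the one-dimensional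
Ehrhard inequality for intervals it also preserves convexity, hence the Lipschitz constant. If `e`
is orthogonal to `E[g(X) X]`, this strictly increases the norm of the moment unless `g` is constant
along `e`. The maximizer therefore depends on a single coordinate, and one more rearrangement on the
line makes it nondecreasing.
-/

open Set Filter Topology
open scoped NNReal ENNReal RealInnerProductSpace Pointwise

local notation "γ" => gaussianReal 0 1
local notation "φ" => gaussianPDFReal 0 1
local notation "Φ" => (cdf (gaussianReal 0 1) : ℝ → ℝ)

section GaussianLine

variable {m x y : ℝ} {v : ℝ≥0}

lemma hasDerivAt_gaussianPDFReal (m : ℝ) (v : ℝ≥0) (x : ℝ) :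
    HasDerivAt (gaussianPDFReal m v) (-((x - m) / v) * gaussianPDFReal m v x) x := by
  have hexponent : HasDerivAt (fun s ↦ -(s - m) ^ 2 / (2 * v)) (-(2 * (x - m)) / (2 * v)) x := by
    simpa using ((((hasDerivAt_id x).sub_const m).pow 2).neg.div_const (2 * (v : ℝ)))
  rw [gaussianPDFReal_def]
  refine (hexponent.exp.const_mul _).congr_deriv ?_
  rw [neg_mul_eq_mul_neg, mul_div_mul_left _ _ two_ne_zero]
  ring

lemma continuous_gaussianPDFReal (m : ℝ) (v : ℝ≥0) : Continuous (gaussianPDFReal m v) :=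
  continuous_iff_continuousAt.2 fun x ↦ (hasDerivAt_gaussianPDFReal m v x).continuousAt

lemma cdf_gaussianReal_eq_integral (m : ℝ) (hv : v ≠ 0) (x : ℝ) :
    cdf (gaussianReal m v) x = ∫ s in Iic x, gaussianPDFReal m v s := by
  rw [cdf_eq_real, measureReal_def, gaussianReal_apply_eq_integral m hv,
    ENNReal.toReal_ofReal (integral_nonneg fun s ↦ gaussianPDFReal_nonneg m v s)]

lemma hasDerivAt_cdf_gaussianReal (m : ℝ) (hv : v ≠ 0) (x : ℝ) :
    HasDerivAt (cdf (gaussianReal m v)) (gaussianPDFReal m v x) x := by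
  have hcont := continuous_gaussianPDFReal m v
  have hint := integrable_gaussianPDFReal m v
  have hderiv := intervalIntegral.integral_hasDerivAt_right (hcont.intervalIntegrable 0 x)
    hcont.stronglyMeasurable.stronglyMeasurableAtFilter hcont.continuousAt
  refine (hderiv.const_add (cdf (gaussianReal m v) 0)).congr_of_eventuallyEq (.of_forall fun s ↦ ?_)
  simp only [cdf_gaussianReal_eq_integral m hv,
    ← intervalIntegral.integral_Iic_sub_Iic hint.integrableOn hint.integrableOn]
  ring

lemma continuous_cdf_gaussianReal (m : ℝ) (hv : v ≠ 0) : Continuous (cdf (gaussianReal m v)) :=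
  continuous_iff_continuousAt.2 fun x ↦ (hasDerivAt_cdf_gaussianReal m hv x).continuousAt

lemma strictMono_cdf_gaussianReal (m : ℝ) (hv : v ≠ 0) : StrictMono (cdf (gaussianReal m v)) :=
  strictMono_of_hasDerivAt_pos (hasDerivAt_cdf_gaussianReal m hv)
    fun x ↦ gaussianPDFReal_pos m v x hv

lemma cdf_gaussianReal_mem_Ioo (m : ℝ) (hv : v ≠ 0) (x : ℝ) :
    cdf (gaussianReal m v) x ∈ Ioo 0 1 :=
  ⟨(cdf_nonneg _ _).trans_lt (strictMono_cdf_gaussianReal m hv (sub_one_lt x)),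
    (strictMono_cdf_gaussianReal m hv (lt_add_one x)).trans_le (cdf_le_one _ _)⟩

lemma range_cdf_gaussianReal (m : ℝ) (hv : v ≠ 0) : range (cdf (gaussianReal m v)) = Ioo 0 1 := by
  refine (range_subset_iff.2 (cdf_gaussianReal_mem_Ioo m hv)).antisymm fun r hr ↦ ?_
  obtain ⟨a, ha⟩ := ((tendsto_cdf_atBot (gaussianReal m v)).eventually_lt_const hr.1).exists
  obtain ⟨b, hb⟩ := ((tendsto_cdf_atTop (gaussianReal m v)).eventually_const_lt hr.2).exists
  exact mem_range_of_exists_le_of_exists_ge (continuous_cdf_gaussianReal m hv)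
    ⟨a, ha.le⟩ ⟨b, hb.le⟩

lemma gaussianPDFReal_zero_neg (v : ℝ≥0) (x : ℝ) :
    gaussianPDFReal 0 v (-x) = gaussianPDFReal 0 v x := by
  simp [gaussianPDFReal]

lemma gaussianReal_real_Icc (hv : v ≠ 0) (h : x ≤ y) :
    (gaussianReal m v).real (Icc x y) = cdf (gaussianReal m v) y - cdf (gaussianReal m v) x := by
  have := nullSingletonClass_gaussianReal (μ := m) hv
  rw [cdf_eq_real, cdf_eq_real, ← measureReal_sdiff (Iic_subset_Iic.2 h) measurableSet_Iic,
    Iic_sdiff_Iic, measureReal_congr Ioc_ae_eq_Icc]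

lemma cdf_gaussianReal_zero_neg (hv : v ≠ 0) (x : ℝ) :
    cdf (gaussianReal 0 v) (-x) = 1 - cdf (gaussianReal 0 v) x := by
  have := nullSingletonClass_gaussianReal (μ := 0) hv
  have hsymm : (gaussianReal 0 v).map (fun s ↦ -s) = gaussianReal 0 v := by
    simpa using gaussianReal_map_neg (μ := 0) (v := v)
  calc cdf (gaussianReal 0 v) (-x)
    _ = (gaussianReal 0 v).real (Ici x) := by
      rw [cdf_eq_real]
      conv_lhs => rw [← hsymm]
      rw [map_measureReal_apply measurable_neg measurableSet_Iic]
      congr 1 with s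
      simp
    _ = 1 - cdf (gaussianReal 0 v) x := by
      rw [cdf_eq_real, ← probReal_compl_eq_one_sub measurableSet_Iic, compl_Iic,
        measureReal_congr Ioi_ae_eq_Ici]

lemma cdf_gaussianReal_zero_zero (hv : v ≠ 0) : cdf (gaussianReal 0 v) 0 = 1 / 2 := by
  linarith [neg_zero (G := ℝ) ▸ cdf_gaussianReal_zero_neg hv 0]

end GaussianLine

section MillsRatio

variable {x y z s : ℝ}

lemma tendsto_gaussianPDFReal_div_id_atTop : Tendsto (fun s ↦ φ s / s) atTop (𝓝 0) := by
  refine squeeze_zero' ?_ ?_ ((tendsto_const_nhds (x := φ 0)).div_atTop tendsto_id)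
  · filter_upwards [eventually_gt_atTop 0] with s hs
    exact div_nonneg (gaussianPDFReal_nonneg 0 1 s) hs.le
  · filter_upwards [eventually_gt_atTop 0] with s hs
    refine div_le_div_of_nonneg_right ?_ hs.le
    simp only [gaussianPDFReal]
    gcongr

lemma hasDerivAt_gaussianPDFReal_div_id_add (c : ℝ) (hs : 0 < s) :
    HasDerivAt (fun s ↦ φ s / s + (1 + c) * Φ s) (φ s * (c - 1 / s ^ 2)) s := by
  refine (((hasDerivAt_gaussianPDFReal 0 1 s).div (hasDerivAt_id s) hs.ne').add
    ((hasDerivAt_cdf_gaussianReal 0 one_ne_zero s).const_mul (1 + c))).congr_deriv ?_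
  simp only [id, sub_zero, NNReal.coe_one, div_one]
  field_simp
  ring

lemma gaussianPDFReal_div_add_le (hy : 0 < y) (hs : 0 < s) :
    φ y / y + (1 + 1 / y ^ 2) * (Φ y - Φ s) ≤ φ s / s := by
  have hderiv := fun r (hr : 0 < r) ↦ hasDerivAt_gaussianPDFReal_div_id_add (1 / y ^ 2) hr
  have hmin : IsMinOn (fun s ↦ φ s / s + (1 + 1 / y ^ 2) * Φ s) (Ioi 0) y := by
    refine isMinOn_Ioi_of_deriv (hderiv y hy).continuousAt
      (fun r hr ↦ (hderiv r hr.1).differentiableAt.differentiableWithinAt)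
      (fun r hr ↦ (hderiv r (hy.trans hr)).differentiableAt.differentiableWithinAt)
      (fun r hr ↦ ?_) (fun r hr ↦ ?_)
    · rw [(hderiv r hr.1).deriv]
      refine mul_nonpos_of_nonneg_of_nonpos (gaussianPDFReal_nonneg 0 1 r) (sub_nonpos.2 ?_)
      exact one_div_le_one_div_of_le (pow_pos hr.1 2) (pow_le_pow_left₀ hr.1.le hr.2.le 2)
    · rw [(hderiv r (hy.trans hr)).deriv]
      refine mul_nonneg (gaussianPDFReal_nonneg 0 1 r) (sub_nonneg.2 ?_)
      exact one_div_le_one_div_of_le (pow_pos hy 2) (pow_le_pow_left₀ hy.le (le_of_lt hr) 2)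
  linarith [isMinOn_iff.1 hmin s hs]

lemma gaussianPDFReal_div_le (hy : 0 < y) : φ y / y ≤ (1 + 1 / y ^ 2) * (1 - Φ y) := by
  have hlim : Tendsto (fun s ↦ φ y / y + (1 + 1 / y ^ 2) * (Φ y - Φ s)) atTop
      (𝓝 (φ y / y + (1 + 1 / y ^ 2) * (Φ y - 1))) :=
    (((tendsto_cdf_atTop γ).const_sub _).const_mul _).const_add _
  have hle := le_of_tendsto_of_tendsto hlim tendsto_gaussianPDFReal_div_id_atTop <| by
    filter_upwards [eventually_gt_atTop 0] with s hs using gaussianPDFReal_div_add_le hy hs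
  linarith

lemma gaussianPDFReal_div_add_div_le_div (hx : 0 < x) (hy : 0 < y) (hz : 0 < z)
    (h : (1 - Φ x) + (1 - Φ y) = 1 - Φ z) : φ x / x + φ y / y ≤ φ z / z := by
  wlog hyx : y ≤ x generalizing x y
  · linarith [this hy hx (by linarith) (le_of_not_ge hyx)]
  calc φ x / x + φ y / y
    _ ≤ (1 + 1 / x ^ 2) * (1 - Φ x) + φ y / y := by gcongr; exact gaussianPDFReal_div_le hx
    _ ≤ (1 + 1 / y ^ 2) * (1 - Φ x) + φ y / y := by
      gcongr
      exact sub_nonneg.2 (cdf_le_one _ _)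
    _ = φ y / y + (1 + 1 / y ^ 2) * (Φ y - Φ z) := by
      rw [show 1 - Φ x = Φ y - Φ z by linarith]; ring
    _ ≤ φ z / z := gaussianPDFReal_div_add_le hy hz

end MillsRatio

section QuadraticForm

variable {x y z α β δ : ℝ}

lemma add_sq_mul_le_of_inv_add_inv_le {a b c : ℝ} (ha : 0 < a) (hb : 0 < b)
    (h : a⁻¹ + b⁻¹ ≤ c⁻¹) (α β : ℝ) : c * (α + β) ^ 2 ≤ a * α ^ 2 + b * β ^ 2 := by
  have hcauchy := Finset.sq_sum_div_le_sum_sq_div Finset.univ ![α, β] (g := ![a⁻¹, b⁻¹])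
    (by simp [Fin.forall_fin_two, ha, hb])
  simp only [Fin.sum_univ_two, Matrix.cons_val_zero, Matrix.cons_val_one, div_inv_eq_mul] at hcauchy
  calc c * (α + β) ^ 2
    _ = (α + β) ^ 2 / c⁻¹ := by rw [div_inv_eq_mul, mul_comm]
    _ ≤ (α + β) ^ 2 / (a⁻¹ + b⁻¹) := by gcongr
    _ ≤ a * α ^ 2 + b * β ^ 2 := by linarith

lemma one_half_lt_cdf_gaussianReal_iff : 1 / 2 < Φ x ↔ 0 < x := by
  rw [← cdf_gaussianReal_zero_zero one_ne_zero,
    (strictMono_cdf_gaussianReal 0 one_ne_zero).lt_iff_lt]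

lemma quadraticForm_nonneg_of_neg (h : Φ x + Φ y + Φ z = 2) (hsum : α + β + δ = 0) (hz : z < 0) :
    0 ≤ x / φ x * α ^ 2 + y / φ y * β ^ 2 + z / φ z * δ ^ 2 := by
  have hΦz : Φ z < 1 / 2 :=
    (strictMono_cdf_gaussianReal 0 one_ne_zero hz).trans_eq (cdf_gaussianReal_zero_zero one_ne_zero)
  have hx : 0 < x := one_half_lt_cdf_gaussianReal_iff.1 (by linarith [cdf_le_one γ y])
  have hy : 0 < y := one_half_lt_cdf_gaussianReal_iff.1 (by linarith [cdf_le_one γ x])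
  have hpos := fun s ↦ gaussianPDFReal_pos 0 1 s one_ne_zero
  have htails : (1 - Φ x) + (1 - Φ y) = 1 - Φ (-z) := by
    rw [cdf_gaussianReal_zero_neg one_ne_zero]; linarith
  have hle := add_sq_mul_le_of_inv_add_inv_le (c := -z / φ (-z)) (div_pos hx (hpos x))
    (div_pos hy (hpos y))
    (by simpa only [inv_div] using gaussianPDFReal_div_add_div_le_div hx hy (neg_pos.2 hz) htails)
    α β
  rw [gaussianPDFReal_zero_neg, neg_div, show α + β = -δ by linarith, neg_sq] at hle
  linarith

lemma quadraticForm_nonneg (h : Φ x + Φ y + Φ z = 2) (hsum : α + β + δ = 0) :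
    0 ≤ x / φ x * α ^ 2 + y / φ y * β ^ 2 + z / φ z * δ ^ 2 := by
  rcases lt_or_ge z 0 with hz | hz
  · exact quadraticForm_nonneg_of_neg h hsum hz
  rcases lt_or_ge y 0 with hy | hy
  · linarith [quadraticForm_nonneg_of_neg (x := x) (y := z) (α := α) (β := δ) (δ := β)
      (by linarith) (by linarith) hy]
  rcases lt_or_ge x 0 with hx | hx
  · linarith [quadraticForm_nonneg_of_neg (x := y) (y := z) (α := β) (β := δ) (δ := α)
      (by linarith) (by linarith) hx]
  have := fun s ↦ gaussianPDFReal_nonneg 0 1 s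
  positivity [this x, this y, this z]

end QuadraticForm

/-- The inverse of the standard Gaussian distribution function on `(0, 1)`; it takes junk values
elsewhere. -/
noncomputable def probit : ℝ → ℝ := Function.invFun Φ

section Probit

variable {r : ℝ}

lemma probit_cdf (x : ℝ) : probit (Φ x) = x :=
  Function.leftInverse_invFun (strictMono_cdf_gaussianReal 0 one_ne_zero).injective x

lemma cdf_probit (hr : r ∈ Ioo 0 1) : Φ (probit r) = r :=
  Function.invFun_eq (range_cdf_gaussianReal 0 one_ne_zero ▸ hr : r ∈ range Φ)

lemma strictMonoOn_probit : StrictMonoOn probit (Ioo 0 1) := fun r hr s hs hrs ↦ by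
  rwa [← (strictMono_cdf_gaussianReal 0 one_ne_zero).lt_iff_lt, cdf_probit hr, cdf_probit hs]

lemma continuousAt_probit (hr : r ∈ Ioo 0 1) : ContinuousAt probit r := by
  have himage : probit '' Ioo 0 1 = univ := eq_univ_of_forall fun x ↦
    ⟨Φ x, cdf_gaussianReal_mem_Ioo 0 one_ne_zero x, probit_cdf x⟩
  exact strictMonoOn_probit.continuousAt_of_image_mem_nhds (Ioo_mem_nhds hr.1 hr.2)
    (himage ▸ univ_mem)

lemma hasDerivAt_probit (hr : r ∈ Ioo 0 1) : HasDerivAt probit (φ (probit r))⁻¹ r :=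
  (hasDerivAt_cdf_gaussianReal 0 one_ne_zero _).of_local_left_inverse (continuousAt_probit hr)
    (gaussianPDFReal_pos 0 1 _ one_ne_zero).ne'
    (eventually_of_mem (Ioo_mem_nhds hr.1 hr.2) fun _ ↦ cdf_probit)

end Probit

section EhrhardInterval

variable {a b : ℝ}

lemma cdf_sub_cdf_mem_Ioo (hab : a < b) : Φ b - Φ a ∈ Ioo 0 1 := by
  have ha := cdf_gaussianReal_mem_Ioo 0 one_ne_zero a
  have hb := cdf_gaussianReal_mem_Ioo 0 one_ne_zero b
  exact ⟨sub_pos.2 (strictMono_cdf_gaussianReal 0 one_ne_zero hab), by linarith [ha.1, hb.2]⟩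

lemma hasDerivAt_add_mul_const (a u t : ℝ) : HasDerivAt (fun t ↦ a + t * u) u t := by
  simpa using ((hasDerivAt_id t).mul_const u).const_add a

lemma hasDerivAt_probit_cdf_sub_cdf {u v t : ℝ} (h : a + t * u < b + t * v) :
    HasDerivAt (fun t ↦ probit (Φ (b + t * v) - Φ (a + t * u)))
      ((φ (b + t * v) * v - φ (a + t * u) * u) / φ (probit (Φ (b + t * v) - Φ (a + t * u)))) t := by
  have hcdf := fun c w ↦ (hasDerivAt_cdf_gaussianReal 0 one_ne_zero (c + t * w)).comp t
    (hasDerivAt_add_mul_const c w t)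
  have hprobit := (hasDerivAt_probit (cdf_sub_cdf_mem_Ioo h)).comp t ((hcdf b v).sub (hcdf a u))
  exact hprobit.congr_deriv (by rw [mul_comm, ← div_eq_mul_inv])

lemma hasDerivAt_deriv_probit_cdf_sub_cdf {u v t : ℝ} (h : a + t * u < b + t * v) :
    HasDerivAt
      (fun t ↦ (φ (b + t * v) * v - φ (a + t * u) * u) /
        φ (probit (Φ (b + t * v) - Φ (a + t * u))))
      (-((b + t * v) * φ (b + t * v) * v ^ 2 - (a + t * u) * φ (a + t * u) * u ^ 2 -
          probit (Φ (b + t * v) - Φ (a + t * u)) / φ (probit (Φ (b + t * v) - Φ (a + t * u))) *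
            (φ (b + t * v) * v - φ (a + t * u) * u) ^ 2) /
        φ (probit (Φ (b + t * v) - Φ (a + t * u)))) t := by
  have hpdf := fun c w ↦ ((hasDerivAt_gaussianPDFReal 0 1 (c + t * w)).comp t
    (hasDerivAt_add_mul_const c w t)).mul_const w
  have hprobit := (hasDerivAt_gaussianPDFReal 0 1 _).comp t (hasDerivAt_probit_cdf_sub_cdf h)
  have hpos := gaussianPDFReal_pos 0 1 (probit (Φ (b + t * v) - Φ (a + t * u))) one_ne_zero
  refine (((hpdf b v).sub (hpdf a u)).div hprobit hpos.ne').congr_deriv ?_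
  simp only [Function.comp_apply, Pi.sub_apply, sub_zero, NNReal.coe_one, div_one]
  field_simp
  ring

lemma second_deriv_probit_cdf_sub_cdf_nonpos (hab : a < b) (u v : ℝ) :
    -(b * φ b * v ^ 2 - a * φ a * u ^ 2 -
        probit (Φ b - Φ a) / φ (probit (Φ b - Φ a)) * (φ b * v - φ a * u) ^ 2) /
      φ (probit (Φ b - Φ a)) ≤ 0 := by
  have hpos := fun s ↦ gaussianPDFReal_pos 0 1 s one_ne_zero
  refine div_nonpos_of_nonpos_of_nonneg (neg_nonpos.2 ?_) (hpos _).le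
  have hΦ : Φ b + Φ (-a) + Φ (-probit (Φ b - Φ a)) = 2 := by
    rw [cdf_gaussianReal_zero_neg one_ne_zero, cdf_gaussianReal_zero_neg one_ne_zero,
      cdf_probit (cdf_sub_cdf_mem_Ioo hab)]
    ring
  have hquad := quadraticForm_nonneg hΦ
    (show φ b * v + -(φ a * u) + -(φ b * v - φ a * u) = 0 by ring)
  have hweight : ∀ s w, s / φ s * (φ s * w) ^ 2 = s * φ s * w ^ 2 := fun s w ↦ by
    field_simp [(hpos s).ne']
  simp only [gaussianPDFReal_zero_neg, neg_sq, neg_div, neg_mul, hweight] at hquad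
  linarith

lemma concaveOn_probit_cdf_sub_cdf_line (a b u v : ℝ) :
    ConcaveOn ℝ {t | a + t * u < b + t * v}
      fun t ↦ probit (Φ (b + t * v) - Φ (a + t * u)) := by
  have hconvex : Convex ℝ {t : ℝ | a + t * u < b + t * v} := by
    have heq : {t : ℝ | a + t * u < b + t * v} = {t : ℝ | (u - v) * t < b - a} := by
      ext t
      constructor <;> intro ht <;> simp only [mem_ofPred_eq] at ht ⊢ <;> linarith
    exact heq ▸ convex_halfSpace_lt (LinearMap.isLinear (LinearMap.mulLeft ℝ (u - v))) (b - a)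
  have hsubset : interior {t : ℝ | a + t * u < b + t * v} ⊆ {t | a + t * u < b + t * v} :=
    interior_subset
  exact concaveOn_of_hasDerivWithinAt2_nonpos hconvex
    (fun t ht ↦ (hasDerivAt_probit_cdf_sub_cdf ht).continuousAt.continuousWithinAt)
    (fun t ht ↦ (hasDerivAt_probit_cdf_sub_cdf (hsubset ht)).hasDerivWithinAt)
    (fun t ht ↦ (hasDerivAt_deriv_probit_cdf_sub_cdf (hsubset ht)).hasDerivWithinAt)
    (fun t ht ↦ second_deriv_probit_cdf_sub_cdf_nonpos (hsubset ht) u v)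

lemma concaveOn_probit_cdf_sub_cdf :
    ConcaveOn ℝ {p : ℝ × ℝ | p.1 < p.2} fun p ↦ probit (Φ p.2 - Φ p.1) := by
  refine ⟨(convex_iff_forall_pos.2 fun p hp q hq a b ha hb _ ↦ ?_),
    fun p hp q hq a b ha hb hab ↦ ?_⟩
  · exact add_lt_add (mul_lt_mul_of_pos_left hp ha) (mul_lt_mul_of_pos_left hq hb)
  · have hline := (concaveOn_probit_cdf_sub_cdf_line p.1 p.2 (q.1 - p.1) (q.2 - p.2)).2
      (x := 0) (by simpa using hp) (y := 1) (by simpa using hq) ha hb hab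
    obtain rfl : a = 1 - b := by linarith
    convert hline using 1
    · simp
    · simp only [Prod.snd_add, Prod.fst_add, Prod.smul_fst, Prod.smul_snd, smul_eq_mul]
      ring_nf

end EhrhardInterval

section EhrhardConvex

variable {A B : Set ℝ} {a b p q r : ℝ}

lemma exists_Icc_subset_lt_cdf_sub_cdf (hA : Convex ℝ A) (hr : 0 ≤ r) (h : r < (γ).real A) :
    ∃ c d, c < d ∧ Icc c d ⊆ A ∧ r < Φ d - Φ c := by
  have hrA : ENNReal.ofReal r < γ A := by
    rwa [← ofReal_measureReal, ENNReal.ofReal_lt_ofReal_iff_of_nonneg hr]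
  obtain ⟨K, hKA, hK, hrK⟩ := hA.ordConnected.measurableSet.exists_lt_isCompact hrA
  have hne : K.Nonempty := nonempty_of_measure_ne_zero (zero_le.trans_lt hrK).ne'
  have hKIcc : K ⊆ Icc (sInf K) (sSup K) := fun x hx ↦
    ⟨csInf_le hK.bddBelow hx, le_csSup hK.bddAbove hx⟩
  have hle : sInf K ≤ sSup K := (hKIcc (hK.sInf_mem hne)).2
  have hrIcc : r < Φ (sSup K) - Φ (sInf K) := by
    rw [← gaussianReal_real_Icc one_ne_zero hle,
      ← ENNReal.ofReal_lt_ofReal_iff_of_nonneg hr, ofReal_measureReal]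
    exact hrK.trans_le (measure_mono hKIcc)
  refine ⟨sInf K, sSup K, ?_, ?_, hrIcc⟩
  · exact (strictMono_cdf_gaussianReal 0 one_ne_zero).lt_iff_lt.1 (by linarith)
  · exact hA.ordConnected.out (hKA (hK.sInf_mem hne)) (hKA (hK.sSup_mem hne))

lemma le_probit_of_cdf_le (hr : r ∈ Ioo 0 1) (h : Φ p ≤ r) : p ≤ probit r := by
  rwa [← (strictMono_cdf_gaussianReal 0 one_ne_zero).le_iff_le, cdf_probit hr]

lemma ehrhard_inequality_line_of_lt (hA : Convex ℝ A) (hB : Convex ℝ B) (ha : 0 ≤ a)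
    (hb : 0 ≤ b) (hab : a + b = 1) (hp : Φ p < (γ).real A) (hq : Φ q < (γ).real B) :
    Φ (a * p + b * q) ≤ (γ).real (a • A + b • B) := by
  obtain ⟨c, d, hcd, hcdA, hpcd⟩ := exists_Icc_subset_lt_cdf_sub_cdf hA (cdf_nonneg _ p) hp
  obtain ⟨c', d', hcd', hcdB, hqcd⟩ := exists_Icc_subset_lt_cdf_sub_cdf hB (cdf_nonneg _ q) hq
  have hlt : a * c + b * c' < a * d + b * d' :=
    concaveOn_probit_cdf_sub_cdf.1 (x := (c, d)) hcd (y := (c', d')) hcd' ha hb hab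
  have hsubset : Icc (a * c + b * c') (a * d + b * d') ⊆ a • A + b • B :=
    ((hA.smul a).add (hB.smul b)).ordConnected.out
      (add_mem_add (smul_mem_smul_set (hcdA (left_mem_Icc.2 hcd.le)))
        (smul_mem_smul_set (hcdB (left_mem_Icc.2 hcd'.le))))
      (add_mem_add (smul_mem_smul_set (hcdA (right_mem_Icc.2 hcd.le)))
        (smul_mem_smul_set (hcdB (right_mem_Icc.2 hcd'.le))))
  have hprobit : a * p + b * q ≤ probit (Φ (a * d + b * d') - Φ (a * c + b * c')) :=
    calc a * p + b * q
      _ ≤ a * probit (Φ d - Φ c) + b * probit (Φ d' - Φ c') := by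
        gcongr
        · exact le_probit_of_cdf_le (cdf_sub_cdf_mem_Ioo hcd) hpcd.le
        · exact le_probit_of_cdf_le (cdf_sub_cdf_mem_Ioo hcd') hqcd.le
      _ ≤ probit (Φ (a * d + b * d') - Φ (a * c + b * c')) :=
        concaveOn_probit_cdf_sub_cdf.2 (x := (c, d)) hcd (y := (c', d')) hcd' ha hb hab
  calc Φ (a * p + b * q)
    _ ≤ Φ (probit (Φ (a * d + b * d') - Φ (a * c + b * c'))) := monotone_cdf γ hprobit
    _ = (γ).real (Icc (a * c + b * c') (a * d + b * d')) := by
      rw [cdf_probit (cdf_sub_cdf_mem_Ioo hlt), gaussianReal_real_Icc one_ne_zero hlt.le]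
    _ ≤ (γ).real (a • A + b • B) := measureReal_mono hsubset

theorem ehrhard_inequality_line (hA : Convex ℝ A) (hB : Convex ℝ B) (ha : 0 ≤ a)
    (hb : 0 ≤ b) (hab : a + b = 1) (hp : Φ p ≤ (γ).real A) (hq : Φ q ≤ (γ).real B) :
    Φ (a * p + b * q) ≤ (γ).real (a • A + b • B) := by
  have hmono := strictMono_cdf_gaussianReal 0 one_ne_zero
  have hshift : ∀ δ > 0, Φ (a * (p - δ) + b * (q - δ)) ≤ (γ).real (a • A + b • B) := fun δ hδ ↦
    ehrhard_inequality_line_of_lt hA hB ha hb hab ((hmono (sub_lt_self p hδ)).trans_le hp)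
      ((hmono (sub_lt_self q hδ)).trans_le hq)
  have hcont : Continuous fun δ ↦ Φ (a * (p - δ) + b * (q - δ)) :=
    (continuous_cdf_gaussianReal 0 one_ne_zero).comp (by fun_prop)
  have hlim := (hcont.tendsto 0).mono_left (nhdsWithin_le_nhds (s := Ioi 0))
  simp only [sub_zero] at hlim
  exact le_of_tendsto hlim (eventually_of_mem self_mem_nhdsWithin hshift)

end EhrhardConvex

section Tail

variable {c z : ℝ} {v : ℝ≥0}

lemma one_sub_cdf_gaussianReal (m : ℝ) (hv : v ≠ 0) (x : ℝ) :
    1 - cdf (gaussianReal m v) x = ∫ s in Ioi x, gaussianPDFReal m v s := by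
  rw [cdf_gaussianReal_eq_integral m hv, ← integral_gaussianPDFReal_eq_one m hv,
    ← integral_add_compl measurableSet_Iic (integrable_gaussianPDFReal m v), compl_Iic,
    add_sub_cancel_left]

lemma gaussianPDFReal_zero_add_le (v : ℝ≥0) (hz : 0 ≤ z) (hc : 0 ≤ c) :
    gaussianPDFReal 0 v (z + c) ≤ exp (-c ^ 2 / (2 * v)) * gaussianPDFReal 0 v z := by
  simp only [gaussianPDFReal, sub_zero]
  rw [mul_left_comm, ← exp_add, ← add_div]
  gcongr
  nlinarith [mul_nonneg hz hc]

lemma one_sub_cdf_gaussianReal_add_le (hv : v ≠ 0) (hz : 0 ≤ z) (hc : 0 ≤ c) :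
    1 - cdf (gaussianReal 0 v) (z + c) ≤
      exp (-c ^ 2 / (2 * v)) * (1 - cdf (gaussianReal 0 v) z) := by
  have hint := integrable_gaussianPDFReal 0 v
  calc 1 - cdf (gaussianReal 0 v) (z + c)
    _ = ∫ s in Ioi z, gaussianPDFReal 0 v (s + c) := by
      rw [one_sub_cdf_gaussianReal 0 hv,
        ← (measurePreserving_add_right volume c).setIntegral_preimage_emb
          (measurableEmbedding_addRight c), preimage_add_const_Ioi, add_sub_cancel_right]
    _ ≤ ∫ s in Ioi z, exp (-c ^ 2 / (2 * v)) * gaussianPDFReal 0 v s :=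
      setIntegral_mono_on (hint.comp_add_right c).integrableOn (hint.const_mul _).integrableOn
        measurableSet_Ioi fun s hs ↦ gaussianPDFReal_zero_add_le v (hz.trans (le_of_lt hs)) hc
    _ = exp (-c ^ 2 / (2 * v)) * (1 - cdf (gaussianReal 0 v) z) := by
      rw [integral_const_mul, one_sub_cdf_gaussianReal 0 hv]

lemma one_sub_cdf_gaussianReal_le (hv : v ≠ 0) (hc : 0 ≤ c) :
    1 - cdf (gaussianReal 0 v) c ≤ 1 / 2 * exp (-c ^ 2 / (2 * v)) := by
  have h := one_sub_cdf_gaussianReal_add_le hv le_rfl hc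
  rw [zero_add, cdf_gaussianReal_zero_zero hv] at h
  linarith

lemma cdf_le_real_Icc_abs_add_two (z : ℝ) :
    Φ z ≤ (γ).real (Icc (-(|z| + 2)) (|z| + 2)) := by
  have htail := one_sub_cdf_gaussianReal_add_le one_ne_zero (abs_nonneg z) zero_le_two
  have hexp : exp (-2 ^ 2 / (2 * (1 : ℝ≥0))) ≤ 1 / 2 := by
    rw [NNReal.coe_one, show (-2 ^ 2 / (2 * 1) : ℝ) = -2 by norm_num, exp_neg, one_div]
    exact inv_anti₀ two_pos (by linarith [add_one_le_exp (2 : ℝ)])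
  have hhalf : 1 - Φ (|z| + 2) ≤ 1 / 2 * (1 - Φ |z|) :=
    htail.trans (mul_le_mul_of_nonneg_right hexp (sub_nonneg.2 (cdf_le_one _ _)))
  rw [gaussianReal_real_Icc one_ne_zero (by linarith [abs_nonneg z]),
    cdf_gaussianReal_zero_neg one_ne_zero]
  linarith [monotone_cdf γ (le_abs_self z)]

end Tail

/-- The quantile function of `ν` in the Gaussian scale: `gaussianQuantile ν z` is the quantile of
`ν` of order `Φ z`, so that it is the nondecreasing transport map from `γ` to `ν`. -/
noncomputable def gaussianQuantile (ν : Measure ℝ) (z : ℝ) : ℝ := sInf {τ | Φ z ≤ cdf ν τ}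

section GaussianQuantile

variable (ν : Measure ℝ) {k : ℝ → ℝ} {r z τ c : ℝ}

lemma gaussianQuantile_le_iff : gaussianQuantile ν z ≤ τ ↔ Φ z ≤ cdf ν τ := by
  have hΦ := cdf_gaussianReal_mem_Ioo 0 one_ne_zero z
  have hne : {τ | Φ z ≤ cdf ν τ}.Nonempty :=
    ((tendsto_cdf_atTop ν).eventually_const_le hΦ.2).exists
  have hbdd : BddBelow {τ | Φ z ≤ cdf ν τ} := by
    obtain ⟨a, ha⟩ := ((tendsto_cdf_atBot ν).eventually_lt_const hΦ.1).exists
    exact ⟨a, fun σ hσ ↦ ((monotone_cdf ν).reflect_lt (ha.trans_le hσ)).le⟩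
  refine ⟨fun h ↦ ?_, fun h ↦ csInf_le hbdd h⟩
  have hright : Tendsto (cdf ν) (𝓝[>] τ) (𝓝 (cdf ν τ)) :=
    ((cdf ν).right_continuous τ).mono Ioi_subset_Ici_self
  refine ge_of_tendsto hright (eventually_of_mem self_mem_nhdsWithin fun x hx ↦ ?_)
  obtain ⟨σ, hσ, hσx⟩ := exists_lt_of_csInf_lt hne (h.trans_lt hx)
  exact le_trans hσ (monotone_cdf ν hσx.le)

lemma monotone_gaussianQuantile : Monotone (gaussianQuantile ν) := fun _ _ h ↦
  (gaussianQuantile_le_iff ν).2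
    ((monotone_cdf γ h).trans ((gaussianQuantile_le_iff ν).1 le_rfl))

lemma gaussianReal_real_cdf_le (hr : r ∈ Icc 0 1) : (γ).real {z | Φ z ≤ r} = r := by
  have hΦ := cdf_gaussianReal_mem_Ioo 0 one_ne_zero
  rcases hr.1.eq_or_lt with rfl | h0
  · simp [show {z | Φ z ≤ 0} = ∅ from eq_empty_of_forall_notMem fun z hz ↦ (hΦ z).1.not_ge hz]
  rcases hr.2.eq_or_lt with rfl | h1
  · simp [show {z | Φ z ≤ 1} = univ from eq_univ_of_forall fun z ↦ cdf_le_one γ z]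
  have hIic : {z | Φ z ≤ r} = Iic (probit r) := by
    ext z
    rw [mem_Iic, ← (strictMono_cdf_gaussianReal 0 one_ne_zero).le_iff_le, cdf_probit ⟨h0, h1⟩]
    rfl
  rw [hIic, ← cdf_eq_real, cdf_probit ⟨h0, h1⟩]

lemma map_gaussianQuantile [IsProbabilityMeasure ν] : (γ).map (gaussianQuantile ν) = ν := by
  have hmeas := (monotone_gaussianQuantile ν).measurable
  have := Measure.isProbabilityMeasure_map (μ := γ) hmeas.aemeasurable
  refine Measure.ext_of_Iic _ _ fun τ ↦ (measureReal_eq_measureReal_iff).1 ?_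
  have hpreimage : gaussianQuantile ν ⁻¹' Iic τ = {z | Φ z ≤ cdf ν τ} := by
    ext z
    exact gaussianQuantile_le_iff ν
  rw [map_measureReal_apply hmeas measurableSet_Iic, hpreimage,
    gaussianReal_real_cdf_le ⟨cdf_nonneg ν τ, cdf_le_one ν τ⟩, cdf_eq_real]

variable {ν}

lemma gaussianQuantile_map_le_iff (hk : Measurable k) :
    gaussianQuantile ((γ).map k) z ≤ τ ↔ Φ z ≤ (γ).real {s | k s ≤ τ} := by
  have := Measure.isProbabilityMeasure_map (μ := γ) hk.aemeasurable
  rw [gaussianQuantile_le_iff, cdf_eq_real ((γ).map k), map_measureReal_apply hk measurableSet_Iic]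
  rfl

instance : (γ).IsOpenPosMeasure :=
  (gaussianReal_absolutelyContinuous' 0 one_ne_zero).isOpenPosMeasure

lemma eq_const_of_gaussianQuantile_map_eq_const (hk : Continuous k)
    (h : gaussianQuantile ((γ).map k) = fun _ ↦ c) : k = fun _ ↦ c := by
  have := Measure.isProbabilityMeasure_map (μ := γ) hk.aemeasurable
  have hdirac : (γ).map k = Measure.dirac c := by
    rw [← map_gaussianQuantile ((γ).map k), h, Measure.map_const, measure_univ, one_smul]
  have hae : k =ᵐ[γ] fun _ ↦ c := by
    refine ae_of_ae_map (p := (· = c)) hk.aemeasurable ?_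
    rw [hdirac, ae_dirac_eq]
    exact rfl
  exact hk.ae_eq_iff_eq γ continuous_const |>.1 hae

lemma convexOn_gaussianQuantile_map {F : Type*} [AddCommGroup F] [Module ℝ F] {G : F → ℝ → ℝ}
    (hG : ConvexOn ℝ univ (Function.uncurry G)) :
    ConvexOn ℝ univ fun p : F × ℝ ↦ gaussianQuantile ((γ).map (G p.1)) p.2 := by
  have hslice : ∀ x, ConvexOn ℝ univ (G x) := fun x ↦ ⟨convex_univ, fun s _ r _ a b ha hb hab ↦ by
    simpa [Convex.combo_self hab] using hG.2 (mem_univ (x, s)) (mem_univ (x, r)) ha hb hab⟩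
  have hmeas : ∀ x, Measurable (G x) := fun x ↦
    (continuousOn_univ.1 ((hslice x).continuousOn isOpen_univ)).measurable
  have hsublevel : ∀ x τ, Convex ℝ {s | G x s ≤ τ} := fun x τ ↦ by
    simpa using (hslice x).convex_le τ
  refine ⟨convex_univ, fun p _ q _ a b ha hb hab ↦ ?_⟩
  set τ := gaussianQuantile ((γ).map (G p.1)) p.2 with hτ
  set σ := gaussianQuantile ((γ).map (G q.1)) q.2 with hσ
  have hsubset : a • {s | G p.1 s ≤ τ} + b • {s | G q.1 s ≤ σ} ⊆
      {s | G (a • p + b • q).1 s ≤ a • τ + b • σ} := by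
    rintro _ ⟨_, ⟨s, hs, rfl⟩, _, ⟨r, hr, rfl⟩, rfl⟩
    refine (hG.2 (mem_univ (p.1, s)) (mem_univ (q.1, r)) ha hb hab).trans ?_
    exact add_le_add (smul_le_smul_of_nonneg_left hs ha) (smul_le_smul_of_nonneg_left hr hb)
  refine (gaussianQuantile_map_le_iff (hmeas _)).2 (le_trans ?_ (measureReal_mono hsubset))
  exact ehrhard_inequality_line (hsublevel _ _) (hsublevel _ _) ha hb hab
    ((gaussianQuantile_map_le_iff (hmeas _)).1 hτ.ge)
    ((gaussianQuantile_map_le_iff (hmeas _)).1 hσ.ge)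

end GaussianQuantile

-- A slope of `g` exceeding `K` would persist along the rest of the ray by convexity.
lemma lipschitzWith_of_convexOn_of_le {F : Type*} [NormedAddCommGroup F] [NormedSpace ℝ F]
    {g : F → ℝ} {C : ℝ} {K : ℝ≥0} (hg : ConvexOn ℝ univ g) (hbound : ∀ x, g x ≤ C + K * ‖x‖) :
    LipschitzWith K g := by
  refine .of_le_add_mul K fun y x ↦ ?_
  have hray : ∀ t : ℝ, 1 ≤ t → g y ≤ g x + K * dist y x + (C + K * ‖x‖ - g x) / t := fun t ht ↦ by
    have htpos : 0 < t := one_pos.trans_le ht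
    have hy : (1 - t⁻¹) • x + t⁻¹ • (x + t • (y - x)) = y := by
      rw [smul_add, inv_smul_smul₀ htpos.ne']; module
    have hnorm : ‖x + t • (y - x)‖ ≤ ‖x‖ + t * dist y x := by
      rw [dist_eq_norm, ← norm_smul_of_nonneg htpos.le]
      exact norm_add_le _ _
    calc g y
      _ ≤ (1 - t⁻¹) * g x + t⁻¹ * g (x + t • (y - x)) := by
        have h := hg.2 (mem_univ x) (mem_univ (x + t • (y - x)))
          (sub_nonneg.2 (inv_le_one_of_one_le₀ ht)) (inv_nonneg.2 htpos.le) (sub_add_cancel 1 t⁻¹)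
        rwa [hy] at h
      _ ≤ (1 - t⁻¹) * g x + t⁻¹ * (C + K * (‖x‖ + t * dist y x)) := by
        gcongr
        exact (hbound _).trans (by gcongr)
      _ = g x + K * dist y x + (C + K * ‖x‖ - g x) / t := by field_simp; ring
  have hlim : Tendsto (fun t : ℝ ↦ g x + K * dist y x + (C + K * ‖x‖ - g x) / t) atTop
      (𝓝 (g x + K * dist y x + 0)) :=
    (tendsto_const_nhds.div_atTop tendsto_id).const_add _
  rw [add_zero] at hlim
  exact ge_of_tendsto hlim ((eventually_ge_atTop 1).mono hray)

section InnerProductSpace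

variable {E : Type*} [NormedAddCommGroup E] [InnerProductSpace ℝ E]

/-- The vector obtained from `x` by changing its coordinate along the unit vector `e` to `s`. -/
noncomputable def updateAlong (e x : E) (s : ℝ) : E := x + (s - ⟪e, x⟫) • e

section UpdateAlong

variable {e u x : E} {s t : ℝ}

lemma updateAlong_inner (e x : E) : updateAlong e x ⟪e, x⟫ = x := by
  simp [updateAlong]

lemma updateAlong_combo (e x y : E) (a b s t : ℝ) :
    updateAlong e (a • x + b • y) (a * s + b * t) =
      a • updateAlong e x s + b • updateAlong e y t := by
  simp only [updateAlong, inner_add_right, inner_smul_right]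
  module

lemma updateAlong_eq_add_smul (e x : E) (s : ℝ) :
    updateAlong e x s = updateAlong e x 0 + s • e := by
  simp only [updateAlong]
  module

lemma continuous_uncurry_updateAlong (e : E) :
    Continuous fun p : E × ℝ ↦ updateAlong e p.1 p.2 := by
  unfold updateAlong
  fun_prop

lemma inner_updateAlong (he : ‖e‖ = 1) (x : E) (s : ℝ) : ⟪e, updateAlong e x s⟫ = s := by
  simp [updateAlong, inner_add_right, inner_smul_right, he]

lemma inner_updateAlong_of_orthogonal (hu : ⟪u, e⟫ = 0) (x : E) (s : ℝ) :
    ⟪u, updateAlong e x s⟫ = ⟪u, x⟫ := by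
  simp [updateAlong, inner_add_right, inner_smul_right, hu]

lemma updateAlong_updateAlong (he : ‖e‖ = 1) (x : E) (s t : ℝ) :
    updateAlong e (updateAlong e x s) t = updateAlong e x t := by
  rw [updateAlong, inner_updateAlong he, updateAlong, updateAlong]
  module

lemma norm_updateAlong_sq (he : ‖e‖ = 1) (x : E) (s : ℝ) :
    ‖updateAlong e x s‖ ^ 2 = ‖x‖ ^ 2 - ⟪e, x⟫ ^ 2 + s ^ 2 := by
  rw [updateAlong, norm_add_sq_real, norm_smul, he, inner_smul_right, real_inner_comm,
    Real.norm_eq_abs, mul_one, sq_abs]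
  ring

lemma inner_updateAlong_zero_comm (e x y : E) :
    ⟪updateAlong e x 0, y⟫ = ⟪x, updateAlong e y 0⟫ := by
  simp only [updateAlong, inner_add_left, inner_add_right, inner_smul_left, inner_smul_right,
    real_inner_comm e x, conj_trivial]
  ring

lemma norm_updateAlong_le (he : ‖e‖ = 1) (hs : |s| ≤ |⟪e, x⟫| + t) (ht : 0 ≤ t) :
    ‖updateAlong e x s‖ ≤ ‖x‖ + t := by
  have hinner : |⟪e, x⟫| ≤ ‖x‖ := by simpa [he] using abs_real_inner_le_norm e x
  refine (sq_le_sq₀ (norm_nonneg _) (by positivity)).1 ?_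
  have hsq : s ^ 2 ≤ (|⟪e, x⟫| + t) ^ 2 :=
    sq_le_sq.2 (hs.trans (le_abs_self _))
  rw [norm_updateAlong_sq he]
  nlinarith [sq_abs ⟪e, x⟫, mul_le_mul_of_nonneg_left hinner ht]

lemma lipschitzWith_updateAlong_zero (he : ‖e‖ = 1) :
    LipschitzWith 1 fun x ↦ updateAlong e x 0 := by
  refine .of_dist_le_mul fun x y ↦ ?_
  have hsub : updateAlong e x 0 - updateAlong e y 0 = updateAlong e (x - y) 0 := by
    simp only [updateAlong, inner_sub_right]
    module
  rw [dist_eq_norm, dist_eq_norm, hsub, NNReal.coe_one, one_mul]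
  simpa using norm_updateAlong_le he (x := x - y) (s := 0) (by simp) le_rfl

end UpdateAlong

/-- The Ehrhard symmetrization of `g` in the direction of the unit vector `e`: on each line
parallel to `e`, the function `g` is replaced by its nondecreasing Gaussian rearrangement. -/
noncomputable def ehrhardSymm (e : E) (g : E → ℝ) (x : E) : ℝ :=
  gaussianQuantile ((γ).map fun s ↦ g (updateAlong e x s)) ⟪e, x⟫

section EhrhardSymm

variable {K : ℝ≥0} {g : E → ℝ} {e : E}

lemma ehrhardSymm_updateAlong (he : ‖e‖ = 1) (g : E → ℝ) (x : E) :
    (fun z ↦ ehrhardSymm e g (updateAlong e x z)) =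
      gaussianQuantile ((γ).map fun s ↦ g (updateAlong e x s)) := by
  ext z
  simp only [ehrhardSymm, updateAlong_updateAlong he, inner_updateAlong he]

lemma continuous_comp_updateAlong (hg : Continuous g) (e x : E) :
    Continuous fun s ↦ g (updateAlong e x s) :=
  hg.comp ((continuous_uncurry_updateAlong e).comp (Continuous.prodMk_right x))

lemma map_ehrhardSymm_updateAlong (hg : Continuous g) (he : ‖e‖ = 1) (x : E) :
    (γ).map (fun z ↦ ehrhardSymm e g (updateAlong e x z)) =
      (γ).map fun z ↦ g (updateAlong e x z) := by
  have := Measure.isProbabilityMeasure_map (μ := γ)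
    (continuous_comp_updateAlong hg e x).aemeasurable
  rw [ehrhardSymm_updateAlong he, map_gaussianQuantile]

lemma convexOn_ehrhardSymm (hg : ConvexOn ℝ univ g) (e : E) :
    ConvexOn ℝ univ (ehrhardSymm e g) := by
  have hslices : ConvexOn ℝ univ (Function.uncurry (fun x s ↦ g (updateAlong e x s))) :=
    ⟨convex_univ, fun p _ q _ a b ha hb hab ↦ by
      simpa only [Function.uncurry, ← updateAlong_combo, Prod.fst_add, Prod.snd_add, Prod.smul_fst,
        Prod.smul_snd, smul_eq_mul] using
        hg.2 (mem_univ (updateAlong e p.1 p.2)) (mem_univ (updateAlong e q.1 q.2)) ha hb hab⟩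
  exact (convexOn_gaussianQuantile_map hslices).comp_linearMap
    (LinearMap.id.prod (innerₛₗ ℝ e))

lemma lipschitzWith_ehrhardSymm (hconv : ConvexOn ℝ univ g) (hlip : LipschitzWith K g)
    (he : ‖e‖ = 1) : LipschitzWith K (ehrhardSymm e g) := by
  refine lipschitzWith_of_convexOn_of_le (C := g 0 + K * 2) (convexOn_ehrhardSymm hconv e)
    fun x ↦ ?_
  refine (gaussianQuantile_map_le_iff
    (continuous_comp_updateAlong hlip.continuous e x).measurable).2
    ((cdf_le_real_Icc_abs_add_two ⟪e, x⟫).trans (measureReal_mono fun s hs ↦ ?_))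
  calc g (updateAlong e x s)
    _ ≤ g 0 + K * dist (updateAlong e x s) 0 := hlip.le_add_mul _ _
    _ ≤ g 0 + K * (‖x‖ + 2) := by
      rw [dist_zero_right]
      gcongr
      exact norm_updateAlong_le he (abs_le.2 hs) zero_le_two
    _ = g 0 + K * 2 + K * ‖x‖ := by ring

lemma ehrhardSymm_sub_mul_inner_nonneg (he : ‖e‖ = 1) (g : E → ℝ) (x : E) :
    0 ≤ (ehrhardSymm e g x - ehrhardSymm e g (updateAlong e x 0)) * ⟪e, x⟫ := by
  have hmono := monotone_gaussianQuantile ((γ).map fun s ↦ g (updateAlong e x s))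
  rw [← ehrhardSymm_updateAlong he] at hmono
  have hx : ehrhardSymm e g x = ehrhardSymm e g (updateAlong e x ⟪e, x⟫) := by
    rw [updateAlong_inner]
  rw [hx]
  rcases le_total 0 ⟪e, x⟫ with h | h
  · exact mul_nonneg (sub_nonneg.2 (hmono h)) h
  · exact mul_nonneg_of_nonpos_of_nonpos (sub_nonpos.2 (hmono h)) h

end EhrhardSymm

section Lipschitz

variable {F : Type*} [NormedAddCommGroup F] [MeasurableSpace F] {K : ℝ≥0} {g : F → ℝ}
  {μ : Measure F} [IsFiniteMeasure μ]

lemma memLp_of_lipschitzWith {p : ℝ≥0∞} (hg : LipschitzWith K g) (hμ : MemLp id p μ) :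
    MemLp g p μ := by
  have hsub : LipschitzWith K fun x ↦ g x - g 0 := by
    simpa using hg.sub (LipschitzWith.const (g 0))
  have h := (hsub.comp_memLp (sub_self _) hμ).add (memLp_const (g 0))
  exact h.ae_eq (ae_of_all _ fun x ↦ by simp)

lemma integrable_smul_of_lipschitzWith [NormedSpace ℝ F] (hg : LipschitzWith K g)
    (hμ : MemLp id 2 μ) : Integrable (fun x ↦ g x • x) μ :=
  memLp_one_iff_integrable.1 (hμ.smul (memLp_of_lipschitzWith hg hμ))

end Lipschitz

section Compactness

variable {X : Type*}

lemma isCompact_setOfPred_lipschitzWith [PseudoMetricSpace X] (K : ℝ≥0) (x₀ : X) (C : ℝ) :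
    IsCompact {g : C(X, ℝ) | LipschitzWith K g ∧ |g x₀| ≤ C} := by
  have himage : ContinuousMap.toFun '' {g : C(X, ℝ) | LipschitzWith K g ∧ |g x₀| ≤ C} =
      {g : X → ℝ | LipschitzWith K g ∧ |g x₀| ≤ C} :=
    Subset.antisymm (by rintro _ ⟨g, hg, rfl⟩; exact hg)
      fun g hg ↦ ⟨⟨g, hg.1.continuous⟩, hg, rfl⟩
  have hclosed : IsClosed {g : X → ℝ | LipschitzWith K g ∧ |g x₀| ≤ C} :=
    (isClosed_setOfPred_lipschitzWith K).inter
      (isClosed_le (continuous_apply x₀).abs continuous_const)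
  have hsubset : {g : X → ℝ | LipschitzWith K g ∧ |g x₀| ≤ C} ⊆
      univ.pi fun x ↦ Metric.closedBall 0 (C + K * dist x x₀) := fun g hg x _ ↦ by
    rw [mem_closedBall_zero_iff, Real.norm_eq_abs]
    have hdist := hg.1.dist_le_mul x x₀
    rw [Real.dist_eq] at hdist
    linarith [abs_sub_abs_le_abs_sub (g x) (g x₀), hg.2]
  refine ArzelaAscoli.isCompact_of_equicontinuous _ ?_ ?_
  · rw [himage]
    exact (isCompact_univ_pi fun x ↦ isCompact_closedBall _ _).of_isClosed_subset hclosed hsubset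
  · exact (LipschitzWith.uniformEquicontinuous _ K fun g ↦ g.2.1).equicontinuous

lemma isClosed_setOfPred_map_eq [TopologicalSpace X] [SecondCountableTopology X]
    [LocallyCompactSpace X] [MeasurableSpace X] [BorelSpace X] (μ : Measure X) [IsFiniteMeasure μ]
    (ν : Measure ℝ) [IsFiniteMeasure ν] : IsClosed {g : C(X, ℝ) | μ.map g = ν} := by
  have hcont : ∀ h : BoundedContinuousFunction ℝ ℝ,
      Continuous fun g : C(X, ℝ) ↦ ∫ x, h (g x) ∂μ := fun h ↦
    continuous_of_dominated (bound := fun _ ↦ ‖h‖)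
      (fun g ↦ (h.continuous.comp g.continuous).aestronglyMeasurable)
      (fun g ↦ ae_of_all _ fun x ↦ h.norm_coe_le_norm _) (integrable_const _)
      (ae_of_all _ fun x ↦ by fun_prop)
  have hset : {g : C(X, ℝ) | μ.map g = ν} =
      ⋂ h : BoundedContinuousFunction ℝ ℝ, {g | ∫ x, h (g x) ∂μ = ∫ y, h y ∂ν} := by
    ext g
    have hmap : ∀ h : BoundedContinuousFunction ℝ ℝ, ∫ y, h y ∂μ.map g = ∫ x, h (g x) ∂μ :=
      fun h ↦ integral_map g.continuous.aemeasurable h.continuous.aestronglyMeasurable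
    simp only [mem_ofPred_eq, mem_iInter, ← hmap]
    exact ⟨fun h ↦ by simp [h], ext_of_forall_integral_eq_of_IsFiniteMeasure⟩
  rw [hset]
  exact isClosed_iInter fun h ↦ isClosed_eq (hcont h) continuous_const

end Compactness

section ConvexLipschitzWithLaw

variable {F : Type*} [NormedAddCommGroup F] [NormedSpace ℝ F] [MeasurableSpace F]

/-- The convex `K`-Lipschitz functions with law `ν` under `μ`, as a set of continuous maps so that
it carries the topology of locally uniform convergence. -/
def convexLipschitzWithLaw (K : ℝ≥0) (μ : Measure F) (ν : Measure ℝ) : Set C(F, ℝ) :=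
  {g | ConvexOn ℝ univ g ∧ LipschitzWith K g ∧ μ.map g = ν}

variable [BorelSpace F] {K : ℝ≥0} {μ : Measure F} [IsProbabilityMeasure μ] {ν : Measure ℝ}

lemma abs_apply_zero_le_of_mem_convexLipschitzWithLaw (hμ : MemLp id 1 μ) {g : C(F, ℝ)}
    (hg : g ∈ convexLipschitzWithLaw K μ ν) :
    |g 0| ≤ ∫ y, |y| ∂ν + K * ∫ x, ‖x‖ ∂μ := by
  have hnorm : Integrable (fun x : F ↦ K * ‖x‖) μ :=
    (memLp_one_iff_integrable.1 hμ).norm.const_mul _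
  have habs : Integrable (fun x ↦ |g x|) μ :=
    (memLp_one_iff_integrable.1 (memLp_of_lipschitzWith hg.2.1 hμ)).abs
  have hpoint : ∀ x, |g 0| ≤ |g x| + K * ‖x‖ := fun x ↦ by
    have hdist := hg.2.1.dist_le_mul 0 x
    rw [Real.dist_eq, dist_zero_left] at hdist
    linarith [abs_sub_abs_le_abs_sub (g 0) (g x)]
  calc |g 0|
    _ = ∫ _, |g 0| ∂μ := by simp
    _ ≤ ∫ x, (|g x| + K * ‖x‖) ∂μ := integral_mono (integrable_const _) (habs.add hnorm) hpoint
    _ = ∫ y, |y| ∂ν + K * ∫ x, ‖x‖ ∂μ := by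
      rw [integral_add habs hnorm, integral_const_mul, ← hg.2.2,
        integral_map g.continuous.aemeasurable continuous_abs.aestronglyMeasurable]

variable [FiniteDimensional ℝ F]

lemma isCompact_convexLipschitzWithLaw [IsFiniteMeasure ν] (hμ : MemLp id 1 μ) :
    IsCompact (convexLipschitzWithLaw K μ ν) := by
  set C := ∫ y, |y| ∂ν + K * ∫ x, ‖x‖ ∂μ
  have hset : convexLipschitzWithLaw K μ ν = {g : C(F, ℝ) | LipschitzWith K g ∧ |g 0| ≤ C} ∩
      ({g | ConvexOn ℝ univ g} ∩ {g | μ.map g = ν}) :=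
    Subset.antisymm (fun g hg ↦ ⟨⟨hg.2.1, abs_apply_zero_le_of_mem_convexLipschitzWithLaw hμ hg⟩,
      hg.1, hg.2.2⟩) fun g hg ↦ ⟨hg.2.1, hg.1.1, hg.2.2⟩
  have hconvex : IsClosed {g : C(F, ℝ) | ConvexOn ℝ univ g} :=
    isClosed_setOfPred_convexOn.preimage continuous_coeFun
  rw [hset]
  exact (isCompact_setOfPred_lipschitzWith K 0 C).inter_right
    (hconvex.inter (isClosed_setOfPred_map_eq μ ν))

lemma continuousOn_integral_smul_convexLipschitzWithLaw (hμ : MemLp id 2 μ) :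
    ContinuousOn (fun g : C(F, ℝ) ↦ ∫ x, g x • x ∂μ) (convexLipschitzWithLaw K μ ν) := by
  set C := ∫ y, |y| ∂ν + K * ∫ x, ‖x‖ ∂μ
  refine continuousOn_of_dominated (bound := fun x ↦ (C + K * ‖x‖) * ‖x‖)
    (fun g hg ↦ (integrable_smul_of_lipschitzWith hg.2.1 hμ).aestronglyMeasurable)
    (fun g hg ↦ ae_of_all _ fun x ↦ ?_) ?_
    (ae_of_all _ fun x ↦ Continuous.continuousOn (by fun_prop))
  · have hdist := hg.2.1.dist_le_mul x 0
    have hzero := abs_apply_zero_le_of_mem_convexLipschitzWithLaw (hμ.mono_exponent one_le_two) hg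
    rw [Real.dist_eq, dist_zero_right] at hdist
    rw [norm_smul, Real.norm_eq_abs]
    gcongr
    linarith [abs_sub_abs_le_abs_sub (g x) (g 0)]
  · have hlin : Integrable (fun x ↦ C * ‖x‖) μ :=
      (memLp_one_iff_integrable.1 (hμ.mono_exponent one_le_two)).norm.const_mul C
    have hquad : Integrable (fun x ↦ K * ‖x‖ ^ 2) μ :=
      (hμ.integrable_norm_pow two_ne_zero).const_mul _
    refine (hlin.add hquad).congr (ae_of_all _ fun x ↦ ?_)
    simp only [Pi.add_apply]
    ring

end ConvexLipschitzWithLaw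

variable [FiniteDimensional ℝ E] [MeasurableSpace E] [BorelSpace E]

section StdGaussian

variable {e : E}

instance : (stdGaussian E).IsOpenPosMeasure :=
  have hcont : Continuous fun x : Fin (Module.finrank ℝ E) → ℝ ↦
      ∑ i, x i • stdOrthonormalBasis ℝ E i := by fun_prop
  hcont.isOpenPosMeasure_map fun y ↦ ⟨_, (stdOrthonormalBasis ℝ E).sum_repr y⟩

lemma measurePreserving_updateAlong (he : ‖e‖ = 1) :
    MeasurePreserving (fun p : E × ℝ ↦ updateAlong e p.1 p.2)
      ((stdGaussian E).prod γ) (stdGaussian E) := by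
  have hmeas := (continuous_uncurry_updateAlong e).measurable
  have := Measure.isProbabilityMeasure_map (μ := (stdGaussian E).prod γ) hmeas.aemeasurable
  refine ⟨hmeas, Measure.ext_of_charFun (funext fun t ↦ ?_)⟩
  have hexp : ∀ p : E × ℝ, Complex.exp (⟪updateAlong e p.1 p.2, t⟫ * Complex.I) =
      Complex.exp (⟪p.1, updateAlong e t 0⟫ * Complex.I) *
        Complex.exp (⟪p.2, ⟪e, t⟫⟫ * Complex.I) := fun p ↦ by
    rw [updateAlong_eq_add_smul, inner_add_left, inner_updateAlong_zero_comm, inner_smul_left,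
      ← Complex.exp_add]
    simp [mul_comm, mul_add]
  calc charFun (((stdGaussian E).prod γ).map fun p ↦ updateAlong e p.1 p.2) t
    _ = charFun (stdGaussian E) (updateAlong e t 0) * charFun γ ⟪e, t⟫ := by
      rw [charFun_apply, integral_map hmeas.aemeasurable (by fun_prop)]
      simp only [hexp]
      exact integral_prod_mul (fun x : E ↦ Complex.exp (⟪x, updateAlong e t 0⟫ * Complex.I))
        (fun s : ℝ ↦ Complex.exp (⟪s, ⟪e, t⟫⟫ * Complex.I))
    _ = charFun (stdGaussian E) t := by
      rw [charFun_stdGaussian, charFun_stdGaussian, charFun_gaussianReal, ← Complex.exp_add,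
        ← Complex.ofReal_pow, norm_updateAlong_sq he]
      congr 1
      push_cast
      ring

end StdGaussian

section LinearMoment

variable {K : ℝ≥0} {g : E → ℝ} {e : E}

/-- The moment `E[g(X) X]` of a standard Gaussian vector `X`: the vector of degree one Hermite
coefficients of `g`. -/
noncomputable def linearMoment (g : E → ℝ) : E := ∫ x, g x • x ∂stdGaussian E

lemma integrable_mul_inner_stdGaussian (hg : LipschitzWith K g) (u : E) :
    Integrable (fun x ↦ g x * ⟪u, x⟫) (stdGaussian E) := by
  have h := (integrable_smul_of_lipschitzWith hg
    (IsGaussian.memLp_two_id (μ := stdGaussian E))).const_inner (𝕜 := ℝ) u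
  simpa only [inner_smul_right] using h

lemma inner_linearMoment (hg : LipschitzWith K g) (u : E) :
    ⟪u, linearMoment g⟫ = ∫ x, g x * ⟪u, x⟫ ∂stdGaussian E := by
  rw [linearMoment, ← integral_inner (integrable_smul_of_lipschitzWith hg IsGaussian.memLp_two_id)]
  simp only [inner_smul_right]

lemma inner_linearMoment_eq_integral_updateAlong (hg : LipschitzWith K g) (he : ‖e‖ = 1) (u : E) :
    ⟪u, linearMoment g⟫ =
      ∫ x, ∫ s, g (updateAlong e x s) * ⟪u, updateAlong e x s⟫ ∂γ ∂stdGaussian E := by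
  have hint := integrable_mul_inner_stdGaussian hg u
  have hpres := measurePreserving_updateAlong he
  calc ⟪u, linearMoment g⟫
    _ = ∫ p : E × ℝ, g (updateAlong e p.1 p.2) * ⟪u, updateAlong e p.1 p.2⟫
          ∂(stdGaussian E).prod γ := by
      rw [inner_linearMoment hg]
      conv_lhs => rw [← hpres.map_eq]
      exact integral_map hpres.aemeasurable (hpres.map_eq.symm ▸ hint.aestronglyMeasurable)
    _ = _ := integral_prod _ (hpres.integrable_comp_of_integrable hint)

lemma inner_linearMoment_eq_zero_of_const_along (hg : LipschitzWith K g) (he : ‖e‖ = 1)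
    (hconst : ∀ x s, g (updateAlong e x s) = g x) : ⟪e, linearMoment g⟫ = 0 := by
  have hline : ∀ x, ∫ s, g x * s ∂γ = 0 := fun x ↦ by
    rw [integral_const_mul, integral_id_gaussianReal, mul_zero]
  simp only [inner_linearMoment_eq_integral_updateAlong hg he, inner_updateAlong he, hconst, hline,
    integral_zero]

end LinearMoment

section EhrhardSymmGaussian

variable {K : ℝ≥0} {g : E → ℝ} {e u : E}

lemma map_ehrhardSymm_stdGaussian (hconv : ConvexOn ℝ univ g) (hlip : LipschitzWith K g)
    (he : ‖e‖ = 1) : (stdGaussian E).map (ehrhardSymm e g) = (stdGaussian E).map g := by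
  have hpres := measurePreserving_updateAlong he
  have hmap : ∀ h : E → ℝ, Continuous h → ∀ S, MeasurableSet S → (stdGaussian E).map h S =
      ∫⁻ x, (γ).map (fun s ↦ h (updateAlong e x s)) S ∂stdGaussian E := fun h hh S hS ↦ by
    have hS' := hh.measurable hS
    rw [Measure.map_apply hh.measurable hS, ← hpres.measure_preimage hS'.nullMeasurableSet,
      Measure.prod_apply (hpres.measurable hS')]
    refine lintegral_congr fun x ↦ ?_
    rw [Measure.map_apply (continuous_comp_updateAlong hh e x).measurable hS]
    rfl
  ext S hS
  rw [hmap _ (lipschitzWith_ehrhardSymm hconv hlip he).continuous S hS,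
    hmap _ hlip.continuous S hS]
  simp only [map_ehrhardSymm_updateAlong hlip.continuous he]

lemma inner_linearMoment_ehrhardSymm_of_orthogonal (hconv : ConvexOn ℝ univ g)
    (hlip : LipschitzWith K g) (he : ‖e‖ = 1) (hu : ⟪u, e⟫ = 0) :
    ⟪u, linearMoment (ehrhardSymm e g)⟫ = ⟪u, linearMoment g⟫ := by
  have hlip' := lipschitzWith_ehrhardSymm hconv hlip he
  have hslice : ∀ h : E → ℝ, Continuous h → ∀ x, ∫ s, h (updateAlong e x s) ∂γ =
      ∫ y, y ∂(γ).map fun s ↦ h (updateAlong e x s) := fun h hh x ↦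
    (integral_map (continuous_comp_updateAlong hh e x).aemeasurable aestronglyMeasurable_id).symm
  simp only [inner_linearMoment_eq_integral_updateAlong hlip he,
    inner_linearMoment_eq_integral_updateAlong hlip' he, inner_updateAlong_of_orthogonal hu,
    integral_mul_const, hslice _ hlip.continuous, hslice _ hlip'.continuous,
    map_ehrhardSymm_updateAlong hlip.continuous he]

lemma ehrhardSymm_updateAlong_eq_of_inner_linearMoment_eq_zero (hconv : ConvexOn ℝ univ g)
    (hlip : LipschitzWith K g) (he : ‖e‖ = 1) (hzero : ⟪e, linearMoment (ehrhardSymm e g)⟫ = 0)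
    (x : E) (s : ℝ) :
    ehrhardSymm e g (updateAlong e x s) = ehrhardSymm e g (updateAlong e x 0) := by
  set h := ehrhardSymm e g
  have hh : LipschitzWith K h := lipschitzWith_ehrhardSymm hconv hlip he
  have hh0 : LipschitzWith K fun x ↦ h (updateAlong e x 0) := by
    simpa [Function.comp_def] using hh.comp (lipschitzWith_updateAlong_zero he)
  have hint := integrable_mul_inner_stdGaussian hh e
  have hint0 := integrable_mul_inner_stdGaussian hh0 e
  have hzero0 := inner_linearMoment_eq_zero_of_const_along hh0 he fun x s ↦ by
    rw [updateAlong_updateAlong he]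
  rw [inner_linearMoment hh] at hzero
  rw [inner_linearMoment hh0] at hzero0
  have hae : (fun x ↦ (h x - h (updateAlong e x 0)) * ⟪e, x⟫) =ᵐ[stdGaussian E] 0 := by
    refine (integral_eq_zero_iff_of_nonneg (ehrhardSymm_sub_mul_inner_nonneg he g) ?_).1 ?_
    · simpa only [h, sub_mul] using hint.sub' hint0
    · simp only [h, sub_mul] at hzero hzero0 ⊢
      rw [integral_sub hint hint0, hzero, hzero0, sub_zero]
  have hcont : Continuous fun x ↦ (h x - h (updateAlong e x 0)) * ⟪e, x⟫ :=
    (hh.continuous.sub hh0.continuous).mul (by fun_prop)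
  have hpoint := congrFun ((hcont.ae_eq_iff_eq _ continuous_zero).1 hae) (updateAlong e x s)
  rcases eq_or_ne s 0 with rfl | hs
  · rfl
  simpa [inner_updateAlong he, updateAlong_updateAlong he, hs, sub_eq_zero] using hpoint

lemma updateAlong_eq_of_inner_linearMoment_ehrhardSymm_eq_zero (hconv : ConvexOn ℝ univ g)
    (hlip : LipschitzWith K g) (he : ‖e‖ = 1) (hzero : ⟪e, linearMoment (ehrhardSymm e g)⟫ = 0)
    (x : E) (s : ℝ) : g (updateAlong e x s) = g x := by
  have hquantile : gaussianQuantile ((γ).map fun s ↦ g (updateAlong e x s)) =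
      fun _ ↦ ehrhardSymm e g (updateAlong e x 0) := by
    rw [← ehrhardSymm_updateAlong he]
    exact funext
      (ehrhardSymm_updateAlong_eq_of_inner_linearMoment_eq_zero hconv hlip he hzero x)
  have hconst := eq_const_of_gaussianQuantile_map_eq_const
    (continuous_comp_updateAlong hlip.continuous e x) hquantile
  conv_rhs => rw [← updateAlong_inner e x]
  exact (congrFun hconst s).trans (congrFun hconst ⟪e, x⟫).symm

end EhrhardSymmGaussian

section Maximizer

variable {K : ℝ≥0} {ν : Measure ℝ} {f : E → ℝ} {e v : E} {g : C(E, ℝ)}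

lemma exists_isMaxOn_norm_linearMoment (hconv : ConvexOn ℝ univ f) (hlip : LipschitzWith K f) :
    ∃ g ∈ convexLipschitzWithLaw K (stdGaussian E) ((stdGaussian E).map f),
      IsMaxOn (fun g : C(E, ℝ) ↦ ‖linearMoment g‖)
        (convexLipschitzWithLaw K (stdGaussian E) ((stdGaussian E).map f)) g :=
  (isCompact_convexLipschitzWithLaw (IsGaussian.memLp_id _ 1 ENNReal.one_ne_top)).exists_isMaxOn
    ⟨⟨f, hlip.continuous⟩, hconv, hlip, rfl⟩
    (continuousOn_integral_smul_convexLipschitzWithLaw IsGaussian.memLp_two_id).norm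

-- Symmetrizing in a direction `e` orthogonal to the moment keeps its other components, and creates
-- a component along `e` unless `g` is constant along `e`.
lemma updateAlong_eq_of_isMaxOn (hg : g ∈ convexLipschitzWithLaw K (stdGaussian E) ν)
    (hmax : IsMaxOn (fun g : C(E, ℝ) ↦ ‖linearMoment g‖)
      (convexLipschitzWithLaw K (stdGaussian E) ν) g)
    (he : ‖e‖ = 1) (horth : ⟪linearMoment g, e⟫ = 0) (x : E) (s : ℝ) :
    g (updateAlong e x s) = g x := by
  obtain ⟨hconv, hlip, hlaw⟩ := hg
  have hlip' := lipschitzWith_ehrhardSymm hconv hlip he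
  have hle : ‖linearMoment (ehrhardSymm e g)‖ ≤ ‖linearMoment g‖ :=
    hmax (a := ⟨ehrhardSymm e g, hlip'.continuous⟩) ⟨convexOn_ehrhardSymm hconv e, hlip',
      (map_ehrhardSymm_stdGaussian hconv hlip he).trans hlaw⟩
  have hinner : ⟪linearMoment (ehrhardSymm e g), linearMoment g⟫ = ‖linearMoment g‖ ^ 2 := by
    rw [real_inner_comm, inner_linearMoment_ehrhardSymm_of_orthogonal hconv hlip he horth,
      real_inner_self_eq_norm_sq]
  have hsub : ‖linearMoment (ehrhardSymm e g) - linearMoment g‖ ^ 2 ≤ 0 := by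
    rw [norm_sub_sq_real, hinner]
    nlinarith [norm_nonneg (linearMoment (ehrhardSymm e g))]
  have heq : linearMoment (ehrhardSymm e g) = linearMoment g := by
    simpa [sub_eq_zero] using hsub.antisymm (sq_nonneg _)
  refine updateAlong_eq_of_inner_linearMoment_ehrhardSymm_eq_zero hconv hlip he ?_ x s
  rw [heq, real_inner_comm, horth]

lemma apply_add_eq_of_isMaxOn (hg : g ∈ convexLipschitzWithLaw K (stdGaussian E) ν)
    (hmax : IsMaxOn (fun g : C(E, ℝ) ↦ ‖linearMoment g‖)
      (convexLipschitzWithLaw K (stdGaussian E) ν) g)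
    (horth : ⟪linearMoment g, v⟫ = 0) (x : E) : g (x + v) = g x := by
  rcases eq_or_ne v 0 with rfl | hv
  · rw [add_zero]
  set e := ‖v‖⁻¹ • v
  have he : ‖e‖ = 1 := norm_smul_inv_norm hv
  have hadd : updateAlong e x (⟪e, x⟫ + ‖v‖) = x + v := by
    rw [updateAlong, add_sub_cancel_left, smul_inv_smul₀ (norm_ne_zero_iff.2 hv)]
  rw [← hadd]
  exact updateAlong_eq_of_isMaxOn hg hmax he (by simp [e, inner_smul_right, horth]) x _

lemma map_inner_stdGaussian (he : ‖e‖ = 1) : (stdGaussian E).map (fun x ↦ ⟪e, x⟫) = γ := by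
  have hpres := measurePreserving_updateAlong he
  conv_lhs => rw [← hpres.map_eq]
  rw [Measure.map_map (by fun_prop) hpres.measurable]
  simp only [Function.comp_def, inner_updateAlong he]
  exact measurePreserving_snd.map_eq

lemma exists_map_gaussianReal_eq_of_isMaxOn
    (hg : g ∈ convexLipschitzWithLaw K (stdGaussian E) ν)
    (hmax : IsMaxOn (fun g : C(E, ℝ) ↦ ‖linearMoment g‖)
      (convexLipschitzWithLaw K (stdGaussian E) ν) g) :
    ∃ k : ℝ → ℝ, ConvexOn ℝ univ k ∧ LipschitzWith K k ∧ (γ).map k = ν := by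
  have hinvariant := fun v hv x ↦ apply_add_eq_of_isMaxOn (v := v) hg hmax hv x
  obtain ⟨hconv, hlip, rfl⟩ := hg
  rcases eq_or_ne (linearMoment g) 0 with hb | hb
  · have hconst : ⇑g = fun _ ↦ g 0 := by
      ext x
      simpa using hinvariant x (by rw [hb, inner_zero_left]) 0
    refine ⟨fun _ ↦ g 0, convexOn_const _ convex_univ, .weaken (.const _) zero_le, ?_⟩
    rw [hconst]
    simp
  set u := ‖linearMoment g‖⁻¹ • linearMoment g
  have hu : ‖u‖ = 1 := norm_smul_inv_norm hb
  have hline : ⇑g = (fun t : ℝ ↦ g (t • u)) ∘ fun x ↦ ⟪u, x⟫ := by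
    ext x
    have horth : ⟪linearMoment g, x - ⟪u, x⟫ • u⟫ = 0 := by
      rw [← smul_inv_smul₀ (norm_ne_zero_iff.2 hb) (linearMoment g), inner_smul_left,
        inner_sub_right, inner_smul_right, real_inner_self_eq_norm_sq, hu]
      simp [u]
    simpa using hinvariant _ horth (⟪u, x⟫ • u)
  refine ⟨fun t ↦ g (t • u), hconv.comp_linearMap (LinearMap.toSpanSingleton ℝ E u), ?_, ?_⟩
  · have hsmul : LipschitzWith 1 fun t : ℝ ↦ t • u := .of_dist_le_mul fun s t ↦ by
      simp [dist_eq_norm, ← sub_smul, norm_smul, hu]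
    simpa [Function.comp_def] using hlip.comp hsmul
  · conv_rhs => rw [hline]
    rw [← Measure.map_map (by fun_prop) (by fun_prop), map_inner_stdGaussian hu]

lemma exists_monotone_map_gaussianReal_eq (hconv : ConvexOn ℝ univ f) (hlip : LipschitzWith K f) :
    ∃ q : ℝ → ℝ, Monotone q ∧ ConvexOn ℝ univ q ∧ LipschitzWith K q ∧
      (γ).map q = (stdGaussian E).map f := by
  obtain ⟨g, hg, hmax⟩ := exists_isMaxOn_norm_linearMoment hconv hlip
  obtain ⟨k, hk, hklip, hlaw⟩ := exists_map_gaussianReal_eq_of_isMaxOn hg hmax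
  have hq : ehrhardSymm 1 k = gaussianQuantile ((γ).map k) := by
    ext z
    simp [ehrhardSymm, updateAlong]
  refine ⟨ehrhardSymm 1 k, ?_, convexOn_ehrhardSymm hk 1,
    lipschitzWith_ehrhardSymm hk hklip norm_one, ?_⟩
  · exact hq ▸ monotone_gaussianQuantile _
  · have := Measure.isProbabilityMeasure_map (μ := γ) hklip.continuous.aemeasurable
    rw [hq, map_gaussianQuantile, hlaw]

end Maximizer

section Concentration

variable {K : ℝ≥0} {q : ℝ → ℝ} {ε : ℝ}

lemma apply_zero_le_integral_gaussianReal (hconv : ConvexOn ℝ univ q) (hlip : LipschitzWith K q) :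
    q 0 ≤ ∫ z, q z ∂γ := by
  have hid : MemLp id 1 γ := memLp_id_gaussianReal 1
  have h := hconv.map_integral_le (μ := γ) (f := id) hlip.continuous.continuousOn isClosed_univ
    (by simp) (memLp_one_iff_integrable.1 hid)
    (memLp_one_iff_integrable.1 (memLp_of_lipschitzWith hlip hid))
  simpa using h

lemma gaussianReal_integral_add_lt_le (hmono : Monotone q) (hconv : ConvexOn ℝ univ q)
    (hlip : LipschitzWith K q) (hK : 0 < K) (hε : 0 ≤ ε) :
    γ {z | ∫ y, q y ∂γ + ε < q z} ≤ ENNReal.ofReal (1 / 2 * exp (-ε ^ 2 / (2 * K ^ 2))) := by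
  have hsubset : {z | ∫ y, q y ∂γ + ε < q z} ⊆ (Iic (ε / K))ᶜ := fun z hz hzε ↦ by
    have hKpos : (0 : ℝ) < K := hK
    have hbound := hlip.le_add_mul (ε / K) 0
    rw [Real.dist_eq, sub_zero, abs_of_nonneg (by positivity), mul_div_cancel₀ _ hKpos.ne']
      at hbound
    linarith [hmono (mem_Iic.1 hzε), apply_zero_le_integral_gaussianReal hconv hlip,
      mem_ofPred.1 hz]
  rw [← ofReal_measureReal]
  refine ENNReal.ofReal_le_ofReal ?_
  calc (γ).real {z | ∫ y, q y ∂γ + ε < q z}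
    _ ≤ (γ).real (Iic (ε / K))ᶜ := measureReal_mono hsubset
    _ = 1 - Φ (ε / K) := by rw [probReal_compl_eq_one_sub measurableSet_Iic, cdf_eq_real]
    _ ≤ 1 / 2 * exp (-(ε / K) ^ 2 / (2 * (1 : ℝ≥0))) :=
      one_sub_cdf_gaussianReal_le one_ne_zero (by positivity)
    _ = 1 / 2 * exp (-ε ^ 2 / (2 * K ^ 2)) := by
      congr 2
      rw [NNReal.coe_one]
      field_simp

end Concentration

theorem stmt12_general {f : E → ℝ} {K : ℝ≥0} {ε : ℝ} (hconv : ConvexOn ℝ univ f)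
    (hlip : LipschitzWith K f) (hK : 0 < K) (hε : 0 ≤ ε) :
    stdGaussian E {x | ∫ y, f y ∂stdGaussian E + ε < f x} ≤
      ENNReal.ofReal (1 / 2 * exp (-ε ^ 2 / (2 * K ^ 2))) := by
  obtain ⟨q, hmono, hqconv, hqlip, hlaw⟩ := exists_monotone_map_gaussianReal_eq hconv hlip
  have hident : IdentDistrib q f γ (stdGaussian E) :=
    ⟨hqlip.continuous.aemeasurable, hlip.continuous.aemeasurable, hlaw⟩
  calc stdGaussian E {x | ∫ y, f y ∂stdGaussian E + ε < f x}
    _ = γ {z | ∫ y, q y ∂γ + ε < q z} := by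
      rw [← hident.integral_eq]
      exact (hident.measure_mem_eq measurableSet_Ioi).symm
    _ ≤ ENNReal.ofReal (1 / 2 * exp (-ε ^ 2 / (2 * K ^ 2))) :=
      gaussianReal_integral_add_lt_le hmono hqconv hqlip hK hε

end InnerProductSpace

lemma lipschitzWith_comp_ofLp_of_abs_sub_le {ι : Type*} [Fintype ι] {f : (ι → ℝ) → ℝ} {K : ℝ≥0}
    (hf : ∀ x y, |f x - f y| ≤ K * √(∑ i, (x i - y i) ^ 2)) :
    LipschitzWith K fun x : EuclideanSpace ℝ ι ↦ f x.ofLp :=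
  .of_dist_le_mul fun x y ↦ by
    simpa only [Real.dist_eq, EuclideanSpace.dist_eq, sq_abs] using hf x.ofLp y.ofLp

/-- Gaussian concentration around the mean for convex Lipschitz functions of a
standard Gaussian vector in `ℝ^N` (Euclidean norm). -/
theorem stmt12 (N : ℕ) (hN : 1 ≤ N) (f : (Fin N → ℝ) → ℝ) (L : ℝ) (hL : 0 < L)
    (hconv : ConvexOn ℝ Set.univ f)
    (hlip : ∀ x y : Fin N → ℝ,
      |f x - f y| ≤ L * Real.sqrt (∑ i, (x i - y i) ^ 2))
    (ε : ℝ) (hε : 0 < ε) :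
    (Measure.pi fun _ : Fin N => gaussianReal 0 1)
        {x | (∫ y, f y ∂(Measure.pi fun _ : Fin N => gaussianReal 0 1)) + ε < f x}
      ≤ ENNReal.ofReal ((1 / 2) * Real.exp (-ε ^ 2 / (2 * L ^ 2))) := by
  lift L to ℝ≥0 using hL.le
  have hconv' : ConvexOn ℝ univ fun x : EuclideanSpace ℝ (Fin N) ↦ f x.ofLp :=
    hconv.comp_linearMap (WithLp.linearEquiv 2 ℝ (Fin N → ℝ)).toLinearMap
  have hpres : MeasurePreserving (MeasurableEquiv.toLp 2 (Fin N → ℝ))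
      (Measure.pi fun _ ↦ γ) (stdGaussian (EuclideanSpace ℝ (Fin N))) :=
    ⟨(MeasurableEquiv.toLp 2 _).measurable, map_pi_eq_stdGaussian⟩
  have h := stmt12_general hconv' (lipschitzWith_comp_ofLp_of_abs_sub_le hlip) hL hε.le
  rwa [← hpres.integral_comp', ← hpres.measure_preimage_equiv] at h
end
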